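/- Fix an integer d ≥ 2. There exists a sequence (ε_n)_{n≥1} of nonnegative reals with ε_n → 0 as n → ∞ such that, setting t = ⌈(1+ε_n)·n·log n/2⌉ and b = ⌈(1+ε_n)·d·n/2⌉, Builder has a (t,b)-strategy for which the graph G_t is asymptotically almost surely d-connected. -/

import Mathlib

open Filter SimpleGraph
open scoped Classical

noncomputable section

/-- The number of edges of the complete graph on `Fin n`. -/
def numEdges (n : ℕ) : ℕ := Fintype.card ((completeGraph (Fin n)).edgeSet)

/-- A uniformly random ordering of the edges of `K_n` is modelled as a uniformly random
bijection from the edge set of `K_n` to `Fin (numEdges n)`; the edge proposed at the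
(0-indexed) round `r` is the preimage of `r`. -/
abbrev EdgeOrdering (n : ℕ) : Type := ((completeGraph (Fin n)).edgeSet) ≃ Fin (numEdges n)

/-- The list `(e_1, …, e_t)` of the first `t` proposed edges, in the order of proposal. -/
def history {n : ℕ} (σ : EdgeOrdering n) (t : ℕ) : List (Sym2 (Fin n)) :=
  ((List.finRange (numEdges n)).filter (fun (r : Fin (numEdges n)) => decide ((r : ℕ) < t))).map
    (fun r => ((σ.symm r : ((completeGraph (Fin n)).edgeSet)) : Sym2 (Fin n)))

/-- The probability of an event under the uniform measure on a finite type. -/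
def Pr {α : Type*} [Fintype α] (P : α → Prop) : ℝ :=
  ((Finset.univ.filter P).card : ℝ) / (Fintype.card α : ℝ)

/-- A strategy of Builder: given the history `(e_1, …, e_s)` of edges proposed so far
(the current proposal `e_s` being the last entry), decide whether to accept `e_s`. -/
abbrev Strategy (n : ℕ) : Type := List (Sym2 (Fin n)) → Bool

/-- The graph `G_t` built by Builder after the first `t` rounds: its edges are the
edges proposed at some round `r ≤ t` and accepted by the strategy at that round. -/
def builderGraph {n : ℕ} (strat : Strategy n) (σ : EdgeOrdering n) (t : ℕ) :
    SimpleGraph (Fin n) :=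
  SimpleGraph.fromEdgeSet
    {e | ∃ r : Fin (numEdges n), (r : ℕ) < t ∧
        ((σ.symm r : ((completeGraph (Fin n)).edgeSet)) : Sym2 (Fin n)) = e ∧
        strat (history σ ((r : ℕ) + 1)) = true}

/-- The number of edges accepted by Builder during the first `t` rounds. -/
def numAccepted {n : ℕ} (strat : Strategy n) (σ : EdgeOrdering n) (t : ℕ) : ℕ :=
  (Finset.univ.filter (fun e : Sym2 (Fin n) => e ∈ (builderGraph strat σ t).edgeSet)).card

/-- A graph `G` is `d`-connected if it has at least `d + 1` vertices and removing any
set of at most `d - 1` vertices leaves a connected graph. -/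
def IsKConnected {V : Type*} [Fintype V] (d : ℕ) (G : SimpleGraph V) : Prop :=
  d + 1 ≤ Fintype.card V ∧
    ∀ S : Finset V, S.card ≤ d - 1 → (G.induce ((↑S : Set V)ᶜ)).Connected

/-!
Fix a margin `ε > 0`, a `d`-connected template graph `T` of maximum degree `d` with a large but
bounded number of vertices, a set `B` of `d` of them, and split the `n` vertices into equal classes
indexed by the vertices of `T`.

In the first `L = O(n)` rounds Builder accepts matching edges between classes adjacent in `T` and
forest edges inside the classes of `B`. With probability `1 - o(1)` the edges proposed in these
rounds leave no bipartite hole between two sets of `g = n / Γ` vertices. The matchings are then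
perfect up to `O(g)` vertices, and each class of `B` has a tree that misses fewer than `g` of its
vertices. After the loss of `d - 1` vertices some class of `B` is intact, and `T` still contains a
path to it from any class through intact classes; following the matchings along this path leads
from almost every vertex to the tree of that class. Hence all but `ηn` vertices are linked to each
other.

In the remaining rounds each of the at most `ηn` vertices left over is attached to `d` linked ones.
The expected number of useful edges proposed at such a vertex is more than `(1 + ε / 4) log n`, so
all of them succeed. The matchings cost at most `dn / 2` edges, the forests at most the size of `d`
classes, and the second phase at most `dηn`, within the budget `(1 + ε)dn / 2`. Finally `ε` may
tend to zero slowly with `n`.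

The two probabilistic estimates are first moment bounds: given the past, the next proposal is
uniform on the edges not yet seen, so `s ^ hits` and `2 ^ hits`, suitably stopped, have explicitly
bounded means.
-/

/-! ### Connectivity after deleting vertices -/

section Connectivity

variable {V : Type*}

/-- The graph `G − S`, encoded on the vertex set of `G`: the vertices of `S` become isolated. -/
def avoiding (G : SimpleGraph V) (S : Finset V) : SimpleGraph V where
  Adj a b := G.Adj a b ∧ a ∉ S ∧ b ∉ S
  symm := ⟨fun _ _ h => ⟨h.1.symm, h.2.2, h.2.1⟩⟩

lemma avoiding_mono {G H : SimpleGraph V} (h : G ≤ H) (S : Finset V) :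
    avoiding G S ≤ avoiding H S :=
  fun _ _ hab => ⟨h hab.1, hab.2⟩

lemma notMem_of_mem_support_avoiding {G : SimpleGraph V} {S : Finset V} {a b : V}
    (p : (avoiding G S).Walk a b) (hb : b ∉ S) : ∀ x ∈ p.support, x ∉ S := by
  induction p with
  | nil => simpa only [Walk.support_nil, List.mem_singleton, forall_eq] using hb
  | cons h _ ih =>
    simp only [Walk.support_cons, List.mem_cons, forall_eq_or_imp]
    exact ⟨h.2.1, ih hb⟩

lemma reachable_induce_compl_iff {G : SimpleGraph V} {S : Finset V} {u v : V}
    (hu : u ∉ S) (hv : v ∉ S) :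
    (G.induce ((S : Set V)ᶜ)).Reachable ⟨u, hu⟩ ⟨v, hv⟩ ↔ (avoiding G S).Reachable u v := by
  constructor
  · intro h
    exact h.map (⟨Subtype.val, fun {a b} hab => ⟨hab, a.2, b.2⟩⟩ : G.induce _ →g avoiding G S)
  · rintro ⟨p⟩
    induction p with
    | nil => rfl
    | cons h _ ih => exact .trans (Adj.reachable (induce_adj.2 h.1)) (ih h.2.2 hv)

lemma isKConnected_iff_avoiding [Fintype V] {d : ℕ} {G : SimpleGraph V} :
    IsKConnected d G ↔ d + 1 ≤ Fintype.card V ∧ ∀ S : Finset V, S.card ≤ d - 1 →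
      ∀ u ∉ S, ∀ v ∉ S, (avoiding G S).Reachable u v := by
  refine and_congr_right fun hcard => forall₂_congr fun S hS => ?_
  constructor
  · intro h u hu v hv
    exact (reachable_induce_compl_iff hu hv).1 (h.preconnected ⟨u, hu⟩ ⟨v, hv⟩)
  · intro h
    obtain ⟨w, hw⟩ : ∃ w, w ∉ S := Finset.exists_mem_notMem_of_card_lt_card
      (s := S) (t := Finset.univ) (by rw [Finset.card_univ]; lia) |>.imp fun _ hw => hw.2
    have : Nonempty ((S : Set V)ᶜ : Set V) := ⟨⟨w, hw⟩⟩
    exact ⟨fun u v => (reachable_induce_compl_iff u.2 v.2).2 (h u u.2 v v.2)⟩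

lemma IsKConnected.le_degree [Fintype V] {d : ℕ} {G : SimpleGraph V} (hG : IsKConnected d G)
    (v : V) : d ≤ G.degree v := by
  by_contra! hlt
  have hcard : (G.neighborFinset v).card ≤ d - 1 := by rw [card_neighborFinset_eq_degree]; lia
  obtain ⟨hd, hG⟩ := isKConnected_iff_avoiding.1 hG
  obtain ⟨w, -, hw⟩ : ∃ w ∈ Finset.univ, w ∉ insert v (G.neighborFinset v) :=
    Finset.exists_mem_notMem_of_card_lt_card <| by
      have := Finset.card_insert_le v (G.neighborFinset v)
      rw [Finset.card_univ]; lia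
  rw [Finset.mem_insert, not_or] at hw
  obtain ⟨p⟩ := hG _ hcard v (G.notMem_neighborFinset_self v) w hw.2
  cases p with
  | nil => exact hw.1 rfl
  | cons h _ => exact h.2.2 ((G.mem_neighborFinset v _).2 h.1)

/-- The start `c` may itself be deleted: its degree exceeds the number of deleted vertices, so it
still has a surviving neighbour. -/
lemma IsKConnected.exists_walk_avoiding [Fintype V] {d : ℕ} {G : SimpleGraph V}
    (hG : IsKConnected d G) (hd : 1 ≤ d) {S : Finset V} (hS : S.card ≤ d - 1) (c : V) {b : V}
    (hb : b ∉ S) :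
    ∃ p : G.Walk c b, p.length ≤ Fintype.card V ∧ ∀ x ∈ p.support.tail, x ∉ S := by
  obtain ⟨c', hc', hc'S⟩ : ∃ c' ∈ G.neighborFinset c, c' ∉ S :=
    Finset.exists_mem_notMem_of_card_lt_card <| by
      have := hG.le_degree c
      rw [card_neighborFinset_eq_degree]; lia
  obtain ⟨p, hp⟩ := ((isKConnected_iff_avoiding.1 hG).2 S hS c' hc'S b hb).exists_isPath
  have hle : avoiding G S ≤ G := fun _ _ h => h.1
  refine ⟨.cons ((G.mem_neighborFinset c c').1 hc') (p.mapLe hle), ?_, ?_⟩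
  · simpa [Walk.mapLe] using hp.length_lt
  · simpa [Walk.mapLe] using notMem_of_mem_support_avoiding p hb

end Connectivity

section Template

lemma reachable_avoiding_cycleGraph {n : ℕ} {S : Finset (Fin (n + 3))} {x : Fin (n + 3)}
    (hS : S ⊆ {x}) (j : Fin (n + 2)) :
    (avoiding (cycleGraph (n + 3)) S).Reachable (x + 1) (x + j.succ) := by
  have hne (i : Fin (n + 2)) : x + i.succ ∉ S := fun hmem =>
    Fin.succ_ne_zero i (add_eq_left.1 (Finset.mem_singleton.1 (hS hmem)))
  induction j using Fin.induction with
  | zero => rfl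
  | succ i ih =>
    refine ih.trans (Adj.reachable ⟨cycleGraph_adj.2 (.inr ?_), hne _, hne _⟩)
    rw [Fin.succ_castSucc, ← Fin.coeSucc_eq_succ (a := i.succ)]
    abel

lemma isKConnected_two_cycleGraph (n : ℕ) : IsKConnected 2 (cycleGraph (n + 3)) := by
  refine isKConnected_iff_avoiding.2 ⟨by simp, fun S hS u hu v hv => ?_⟩
  obtain ⟨x, hx⟩ := Finset.card_le_one_iff_subset_singleton.1 hS
  suffices h : ∀ w ∉ S, (avoiding (cycleGraph (n + 3)) S).Reachable (x + 1) w from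
    (h u hu).symm.trans (h v hv)
  intro w hw
  rcases eq_or_ne w x with rfl | hwx
  · have hw' : w + 1 ∉ S := fun h => by simpa using hx h
    exact Adj.reachable ⟨cycleGraph_adj.2 (.inl (add_sub_cancel_left w 1)), hw', hw⟩
  · obtain ⟨j, hj⟩ := Fin.exists_succ_eq.2 (sub_ne_zero.2 hwx)
    simpa only [hj, add_sub_cancel] using reachable_avoiding_cycleGraph hx j

/-- The prism over `G`: two copies of `G` joined by a perfect matching. -/
abbrev prism {α : Type*} (G : SimpleGraph α) : SimpleGraph (α × Bool) := G □ ⊤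

/-- The trace of a set of vertices of the prism on the copy labelled `i`. -/
def slice {α : Type*} (S : Finset (α × Bool)) (i : Bool) : Finset α :=
  (S.filter (·.2 = i)).image Prod.fst

variable {α : Type*} {S : Finset (α × Bool)}

lemma mem_slice {i : Bool} {x : α} : x ∈ slice S i ↔ (x, i) ∈ S := by
  simp [slice]

lemma card_slice_add_card_slice (i : Bool) : (slice S i).card + (slice S !i).card = S.card := by
  have hinj (j : Bool) : (slice S j).card = (S.filter (·.2 = j)).card :=
    Finset.card_image_of_injOn fun x hx y hy hxy =>
      Prod.ext hxy ((Finset.mem_filter.1 hx).2.trans (Finset.mem_filter.1 hy).2.symm)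
  have hnot : S.filter (·.2 = !i) = S.filter (¬ ·.2 = i) := by
    simp only [Bool.eq_not, ne_eq]
  rw [hinj, hinj, hnot, Finset.card_filter_add_card_filter_not]

lemma reachable_prism_of_reachable_slice {G : SimpleGraph α} {i : Bool} {x y : α}
    (h : (avoiding G (slice S i)).Reachable x y) :
    (avoiding (prism G) S).Reachable (x, i) (y, i) :=
  h.map (⟨fun z => (z, i), fun {_ _} hab => ⟨boxProd_adj_left.2 hab.1,
    fun h => hab.2.1 (mem_slice.2 h), fun h => hab.2.2 (mem_slice.2 h)⟩⟩ :
    avoiding G (slice S i) →g avoiding (prism G) S)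

lemma reachable_prism_rung {G : SimpleGraph α} {i j : Bool} {x : α} (hi : (x, i) ∉ S)
    (hj : (x, j) ∉ S) : (avoiding (prism G) S).Reachable (x, i) (x, j) := by
  by_cases hij : i = j
  · rw [hij]
  · exact Adj.reachable ⟨boxProd_adj_right.2 hij, hi, hj⟩

/-- Either both copies lose fewer than `d` vertices, and a rung with two surviving ends joins what
is left of them, or one copy is intact and every survivor of the other hangs on it. -/
lemma IsKConnected.prism_succ [Fintype α] {d : ℕ} {G : SimpleGraph α} (hG : IsKConnected d G)
    (hd : 1 ≤ d) : IsKConnected (d + 1) (prism G) := by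
  obtain ⟨hcard, hG⟩ := isKConnected_iff_avoiding.1 hG
  refine isKConnected_iff_avoiding.2 ⟨by rw [Fintype.card_prod, Fintype.card_bool]; lia, ?_⟩
  intro S hS
  suffices h : ∃ z, ∀ u ∉ S, (avoiding (prism G) S).Reachable u z by
    obtain ⟨z, hz⟩ := h
    exact fun u hu v hv => (hz u hu).trans (hz v hv).symm
  have hconn (i : Bool) (hi : (slice S i).card ≤ d - 1) {x y : α} (hx : (x, i) ∉ S)
      (hy : (y, i) ∉ S) : (avoiding (prism G) S).Reachable (x, i) (y, i) :=
    reachable_prism_of_reachable_slice (hG _ hi x (mt mem_slice.1 hx) y (mt mem_slice.1 hy))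
  have hsum := card_slice_add_card_slice (S := S)
  obtain ⟨i, hi⟩ : ∃ i, (slice S i).card ≤ d - 1 := by
    by_contra! h
    have := hsum true
    have := h true
    have := h (!true)
    lia
  obtain ⟨x, -, hx⟩ : ∃ x ∈ Finset.univ, x ∉ slice S i ∪ slice S !i :=
    Finset.exists_mem_notMem_of_card_lt_card <| by
      have := Finset.card_union_le (slice S i) (slice S !i)
      rw [Finset.card_univ]; grind
  simp only [Finset.mem_union, mem_slice, not_or] at hx
  refine ⟨(x, i), fun ⟨a, j⟩ ha => ?_⟩
  obtain rfl | rfl : j = i ∨ j = !i := by cases i <;> cases j <;> simp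
  · exact hconn _ hi ha hx.1
  by_cases hj : (slice S !i).card ≤ d - 1
  · exact (hconn _ hj ha hx.2).trans (reachable_prism_rung hx.2 hx.1)
  · have hempty : slice S i = ∅ := Finset.card_eq_zero.1 (by grind)
    have hai : (a, i) ∉ S := fun h => by simpa [hempty] using mem_slice.2 h
    exact (reachable_prism_rung ha hai).trans (hconn i hi hai hx.1)

lemma exists_isKConnected_degree_le {d : ℕ} (hd : 2 ≤ d) (M : ℕ) :
    ∃ (α : Type) (_ : Fintype α) (T : SimpleGraph α),
      M ≤ Fintype.card α ∧ (∀ c, T.degree c ≤ d) ∧ IsKConnected d T := by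
  induction d, hd using Nat.le_induction with
  | base =>
    refine ⟨Fin (M + 3), inferInstance, cycleGraph (M + 3), by simp,
      fun c => ?_, isKConnected_two_cycleGraph M⟩
    exact le_of_eq (by convert cycleGraph_degree_three_le)
  | succ d hd ih =>
    obtain ⟨α, _, T, hM, hdeg, hT⟩ := ih
    refine ⟨α × Bool, inferInstance, prism T, ?_, fun c => ?_, hT.prism_succ (by lia)⟩
    · rw [Fintype.card_prod, Fintype.card_bool]; lia
    · have hsum := degree_boxProd (G := T) (H := (⊤ : SimpleGraph Bool)) c
      rw [complete_graph_degree, Fintype.card_bool] at hsum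
      exact le_of_eq_of_le (by convert hsum) (Nat.add_le_add_right (hdeg c.1) 1)

end Template

/-! ### Online constructions -/

section Online

variable {V : Type*}

/-- An online rule `acc` turns the list of proposed edges into the graph of accepted ones: each
newly proposed edge is accepted or ignored, and accepted edges are kept. -/
structure IsOnline (acc : List (Sym2 V) → SimpleGraph V) : Prop where
  nil : acc [] = ⊥
  le_append (h : List (Sym2 V)) (e : Sym2 V) : acc h ≤ acc (h ++ [e])
  append_le (h : List (Sym2 V)) (e : Sym2 V) : acc (h ++ [e]) ≤ acc h ⊔ fromEdgeSet {e}

/-- The greedy process with admission rule `R`: a proposed edge `uv` is accepted if the graph `G`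
accepted so far satisfies `R G u v` (or `R G v u`). -/
def greedy (R : SimpleGraph V → V → V → Prop) (h : List (Sym2 V)) : SimpleGraph V :=
  h.foldl (fun G e => if ∃ u v, e = s(u, v) ∧ R G u v then G ⊔ fromEdgeSet {e} else G) ⊥

/-- Follow `acc₁` during the first `L` rounds, then `acc₂`, which may depend on the graph built
by then. -/
def twoPhase (L : ℕ) (acc₁ : List (Sym2 V) → SimpleGraph V)
    (acc₂ : SimpleGraph V → List (Sym2 V) → SimpleGraph V) (h : List (Sym2 V)) : SimpleGraph V :=
  acc₁ (h.take L) ⊔ acc₂ (acc₁ (h.take L)) (h.drop L)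

lemma isOnline_twoPhase {L : ℕ} {acc₁ : List (Sym2 V) → SimpleGraph V}
    {acc₂ : SimpleGraph V → List (Sym2 V) → SimpleGraph V} (h₁ : IsOnline acc₁)
    (h₂ : ∀ G, IsOnline (acc₂ G)) : IsOnline (twoPhase L acc₁ acc₂) := by
  have before {h : List (Sym2 V)} (hL : h.length ≤ L) : twoPhase L acc₁ acc₂ h = acc₁ h := by
    simp only [twoPhase, List.take_of_length_le hL, List.drop_of_length_le hL, (h₂ _).nil,
      sup_bot_eq]
  have after {h : List (Sym2 V)} (hL : L ≤ h.length) (e : Sym2 V) :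
      twoPhase L acc₁ acc₂ (h ++ [e]) =
        acc₁ (h.take L) ⊔ acc₂ (acc₁ (h.take L)) (h.drop L ++ [e]) := by
    simp only [twoPhase, List.take_append_of_le_length hL, List.drop_append_of_le_length hL]
  refine ⟨by rw [before (by simp), h₁.nil], fun h e => ?_, fun h e => ?_⟩
  · rcases lt_or_ge h.length L with hL | hL
    · rw [before hL.le, before (by simpa using hL)]
      exact h₁.le_append h e
    · rw [after hL]
      exact sup_le_sup_left ((h₂ _).le_append _ e) _
  · rcases lt_or_ge h.length L with hL | hL
    · rw [before hL.le, before (by simpa using hL)]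
      exact h₁.append_le h e
    · rw [after hL]
      exact (sup_le_sup_left ((h₂ _).append_le _ e) _).trans_eq (sup_assoc ..).symm

variable {R : SimpleGraph V → V → V → Prop}

lemma greedy_append_singleton (h : List (Sym2 V)) (e : Sym2 V) :
    greedy R (h ++ [e]) = if ∃ u v, e = s(u, v) ∧ R (greedy R h) u v
      then greedy R h ⊔ fromEdgeSet {e} else greedy R h := by
  rw [greedy, List.foldl_append]
  rfl

lemma isOnline_greedy : IsOnline (greedy R) where
  nil := rfl
  le_append h e := by rw [greedy_append_singleton]; split_ifs <;> simp
  append_le h e := by rw [greedy_append_singleton]; split_ifs <;> simp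

lemma greedy_induction {P : SimpleGraph V → Prop} (bot : P ⊥)
    (step : ∀ G u v, P G → R G u v → P (G ⊔ edge u v)) (h : List (Sym2 V)) : P (greedy R h) := by
  induction h using List.reverseRecOn with
  | nil => exact bot
  | append_singleton h e ih =>
    rw [greedy_append_singleton]
    split_ifs with hR
    · obtain ⟨u, v, rfl, hR⟩ := hR
      exact step _ u v ih hR
    · exact ih

lemma greedy_adj_or_not_rule {h : List (Sym2 V)} {u v : V} (hmem : s(u, v) ∈ h) (huv : u ≠ v) :
    (greedy R h).Adj u v ∨ ∃ G ≤ greedy R h, ¬ R G u v := by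
  induction h using List.reverseRecOn with
  | nil => simp at hmem
  | append_singleton h e ih =>
    have hle := (isOnline_greedy (R := R)).le_append h e
    rcases List.mem_append.1 hmem with hmem | hmem
    · exact (ih hmem).imp (fun hadj => hle hadj) fun ⟨G, hG, hR⟩ => ⟨G, hG.trans hle, hR⟩
    · obtain rfl := List.mem_singleton.1 hmem
      by_cases hR : R (greedy R h) u v
      · left
        rw [greedy_append_singleton, if_pos ⟨u, v, rfl, hR⟩]
        exact .inr ⟨rfl, huv⟩
      · exact .inr ⟨_, hle, hR⟩

end Online

section History

variable {n : ℕ} (σ : EdgeOrdering n)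

/-- The edge proposed at the (0-indexed) round `r`. -/
def proposal (r : Fin (numEdges n)) : Sym2 (Fin n) := (σ.symm r : (completeGraph (Fin n)).edgeSet)

lemma filter_val_lt_finRange (N t : ℕ) :
    (List.finRange N).filter (fun r : Fin N => decide ((r : ℕ) < t)) =
      (List.finRange N).take t := by
  induction N generalizing t with
  | zero => simp
  | succ N ih =>
    cases t with
    | zero => simp
    | succ t => simp [List.finRange_succ, List.filter_map, Function.comp_def, ih, List.map_take]

lemma history_eq_take (t : ℕ) : history σ t = (List.ofFn (proposal σ)).take t := by
  rw [history, filter_val_lt_finRange, List.map_take, List.ofFn_eq_map]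
  rfl

lemma history_zero : history σ 0 = [] := by simp [history]

lemma history_succ (r : Fin (numEdges n)) :
    history σ (r + 1) = history σ r ++ [proposal σ r] := by
  rw [history_eq_take, history_eq_take, List.take_add_one]
  simp

lemma take_history (s t : ℕ) : (history σ t).take s = history σ (min s t) := by
  rw [history_eq_take, history_eq_take, List.take_take]

lemma history_of_numEdges_le {t : ℕ} (ht : numEdges n ≤ t) :
    history σ t = history σ (numEdges n) := by
  simp only [history_eq_take]
  rw [List.take_of_length_le (by simpa using ht), List.take_of_length_le (by simp)]

lemma mem_history_iff {t : ℕ} {e : Sym2 (Fin n)} :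
    e ∈ history σ t ↔ ∃ r : Fin (numEdges n), (r : ℕ) < t ∧ proposal σ r = e := by
  simp [history, proposal]

end History

/-- The strategy that builds `acc h` from the history `h`. -/
def onlineStrategy {n : ℕ} (acc : List (Sym2 (Fin n)) → SimpleGraph (Fin n)) : Strategy n :=
  fun h => decide (∃ e ∈ h.getLast?, e ∈ (acc h).edgeSet)

lemma onlineStrategy_history_succ {n : ℕ} (acc : List (Sym2 (Fin n)) → SimpleGraph (Fin n))
    (σ : EdgeOrdering n) (r : Fin (numEdges n)) :
    onlineStrategy acc (history σ (r + 1)) = true ↔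
      proposal σ r ∈ (acc (history σ (r + 1))).edgeSet := by
  simp [onlineStrategy, history_succ]

lemma builderGraph_succ {n : ℕ} (strat : Strategy n) (σ : EdgeOrdering n)
    (r : Fin (numEdges n)) :
    builderGraph strat σ (r + 1) = builderGraph strat σ r ⊔
      fromEdgeSet {e | proposal σ r = e ∧ strat (history σ (r + 1)) = true} := by
  rw [builderGraph, builderGraph, ← fromEdgeSet_union]
  congr 1
  ext e
  simp only [Set.mem_ofPred_eq, Set.mem_union, Nat.lt_succ_iff_lt_or_eq, or_and_right, exists_or,
    Fin.val_inj, exists_eq_left]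
  rfl

lemma builderGraph_of_numEdges_le {n t : ℕ} (strat : Strategy n) (σ : EdgeOrdering n)
    (ht : numEdges n ≤ t) : builderGraph strat σ t = builderGraph strat σ (numEdges n) := by
  simp only [builderGraph, Fin.is_lt, Fin.is_lt _ |>.trans_le ht, true_and]

lemma builderGraph_onlineStrategy {n : ℕ} {acc : List (Sym2 (Fin n)) → SimpleGraph (Fin n)}
    (hacc : IsOnline acc) (σ : EdgeOrdering n) (t : ℕ) :
    builderGraph (onlineStrategy acc) σ t = acc (history σ t) := by
  induction t with
  | zero => simp [builderGraph, history_zero, hacc.nil]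
  | succ t ih =>
    by_cases ht : t < numEdges n
    · have hhist := history_succ σ ⟨t, ht⟩
      have hiff := onlineStrategy_history_succ acc σ ⟨t, ht⟩
      have hle := hacc.le_append (history σ t) (proposal σ ⟨t, ht⟩)
      have hge := hacc.append_le (history σ t) (proposal σ ⟨t, ht⟩)
      rw [← hhist] at hle hge
      rw [builderGraph_succ _ σ ⟨t, ht⟩, ih]
      refine le_antisymm (sup_le hle ?_) fun u v huv => (hge huv).imp_right ?_
      · rintro u v ⟨⟨he, hacc⟩, -⟩
        exact (mem_edgeSet _).1 (he ▸ hiff.1 hacc)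
      · rintro ⟨he, hne⟩
        exact ⟨⟨he.symm, hiff.2 (Set.mem_singleton_iff.1 he ▸ huv)⟩, hne⟩
    · rw [not_lt] at ht
      rw [builderGraph_of_numEdges_le _ σ (ht.trans t.le_succ),
        ← builderGraph_of_numEdges_le _ σ ht, ih, history_of_numEdges_le σ (ht.trans t.le_succ),
        history_of_numEdges_le σ ht]

/-! ### The first phase -/

section PhaseOne

variable {V α : Type*}

/-- The subgraph of `G` formed by the edges whose ends have the same colour. -/
def monoGraph (col : V → α) (G : SimpleGraph V) : SimpleGraph V where
  Adj u v := G.Adj u v ∧ col u = col v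
  symm := ⟨fun _ _ h => ⟨h.1.symm, h.2.symm⟩⟩

/-- The subgraph of `G` formed by the edges whose ends have different colours. -/
def crossGraph (col : V → α) (G : SimpleGraph V) : SimpleGraph V where
  Adj u v := G.Adj u v ∧ col u ≠ col v
  symm := ⟨fun _ _ h => ⟨h.1.symm, h.2.symm⟩⟩

/-- The admission rule of the first phase. Between two colour classes that are adjacent in `T` it
builds a matching, and inside a class whose colour belongs to `B` it builds a forest. -/
def phaseOneRule (T : SimpleGraph α) (B : Finset α) (col : V → α) (G : SimpleGraph V) (u v : V) :
    Prop :=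
  (T.Adj (col u) (col v) ∧ (∀ w, G.Adj u w → col w ≠ col v) ∧ ∀ w, G.Adj v w → col w ≠ col u) ∨
    (col u = col v ∧ col u ∈ B ∧ ¬ (monoGraph col G).Reachable u v)

/-- The graph built in the first phase from a list of proposed edges. -/
def phaseOne (T : SimpleGraph α) (B : Finset α) (col : V → α) (h : List (Sym2 V)) :
    SimpleGraph V :=
  greedy (phaseOneRule T B col) h

variable {T : SimpleGraph α} {B : Finset α} {col : V → α} {h : List (Sym2 V)}

lemma monoGraph_le (G : SimpleGraph V) : monoGraph col G ≤ G := fun _ _ h => h.1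

lemma monoGraph_mono {G H : SimpleGraph V} (hGH : G ≤ H) : monoGraph col G ≤ monoGraph col H :=
  fun _ _ h => ⟨hGH h.1, h.2⟩

lemma phaseOne_adj_col {u v : V} (huv : (phaseOne T B col h).Adj u v) :
    T.Adj (col u) (col v) ∨ (col u = col v ∧ col u ∈ B) := by
  refine greedy_induction
    (P := fun G => ∀ u v, G.Adj u v → T.Adj (col u) (col v) ∨ (col u = col v ∧ col u ∈ B))
    (fun _ _ h => h.elim) (fun G a b hG hR u v huv => ?_) h u v huv
  rcases huv with huv | huv
  · exact hG u v huv
  · obtain ⟨⟨rfl, rfl⟩ | ⟨rfl, rfl⟩, -⟩ := (edge_adj ..).1 huv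
    · exact hR.imp And.left fun ⟨hcol, hB, _⟩ => ⟨hcol, hB⟩
    · exact hR.imp (fun hT => hT.1.symm) fun ⟨hcol, hB, _⟩ => ⟨hcol.symm, hcol ▸ hB⟩

lemma phaseOne_cross_matching {u v w : V} (huv : (phaseOne T B col h).Adj u v)
    (huw : (phaseOne T B col h).Adj u w) (hne : col u ≠ col v) (heq : col v = col w) : v = w := by
  refine greedy_induction (P := fun G => ∀ u v w, G.Adj u v → G.Adj u w → col u ≠ col v →
    col v = col w → v = w) (by simp) (fun G a b hG hR u v w huv huw hne heq => ?_) h u v w huv huw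
    hne heq
  have hrule : col a = col b ∨
      (∀ w, G.Adj a w → col w ≠ col b) ∧ ∀ w, G.Adj b w → col w ≠ col a :=
    hR.elim (fun h => .inr h.2) fun h => .inl h.1
  rw [sup_adj, edge_adj] at huv huw
  grind

lemma exists_adj_of_mem_of_adj_col {u v : V} (hmem : s(u, v) ∈ h) (hT : T.Adj (col u) (col v)) :
    (∃ w, (phaseOne T B col h).Adj u w ∧ col w = col v) ∨
      ∃ w, (phaseOne T B col h).Adj v w ∧ col w = col u := by
  have huv : u ≠ v := fun huv => hT.ne (congrArg col huv)
  rcases greedy_adj_or_not_rule (R := phaseOneRule T B col) hmem huv with hadj | ⟨G, hG, hR⟩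
  · exact .inl ⟨v, hadj, rfl⟩
  · by_contra! hnone
    exact hR (.inl ⟨hT, fun w hw => hnone.1 w (hG hw), fun w hw => hnone.2 w (hG hw)⟩)

lemma reachable_monoGraph_phaseOne {u v : V} (hmem : s(u, v) ∈ h) (hcol : col u = col v)
    (hB : col u ∈ B) : (monoGraph col (phaseOne T B col h)).Reachable u v := by
  rcases eq_or_ne u v with rfl | huv
  · rfl
  rcases greedy_adj_or_not_rule (R := phaseOneRule T B col) hmem huv with hadj | ⟨G, hG, hR⟩
  · exact Adj.reachable ⟨hadj, hcol⟩
  · by_contra hnot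
    exact hR (.inr ⟨hcol, hB, fun hreach => hnot (hreach.mono (monoGraph_mono hG))⟩)

lemma isAcyclic_monoGraph_phaseOne : (monoGraph col (phaseOne T B col h)).IsAcyclic := by
  refine greedy_induction (P := fun G => (monoGraph col G).IsAcyclic)
    (isAcyclic_bot.anti (monoGraph_le ⊥)) (fun G a b hG hR => ?_) h
  rcases hR with ⟨hT, -⟩ | ⟨-, -, hnot⟩
  · refine hG.anti ?_
    rintro u v ⟨huv, hcol⟩
    refine ⟨huv.resolve_right fun hab => ?_, hcol⟩
    obtain ⟨⟨rfl, rfl⟩ | ⟨rfl, rfl⟩, -⟩ := (edge_adj ..).1 hab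
    exacts [hT.ne hcol, hT.ne hcol.symm]
  · refine (hG.sup_edge_of_not_reachable hnot).anti ?_
    rintro u v ⟨huv, hcol⟩
    exact huv.imp_left fun hadj => ⟨hadj, hcol⟩

variable [Fintype V]

lemma card_edgeFinset_le_of_isAcyclic {G : SimpleGraph V} (hG : G.IsAcyclic) {W : Finset V}
    (hW : ∀ u v, G.Adj u v → u ∈ W) : G.edgeFinset.card ≤ W.card := by
  rcases W.eq_empty_or_nonempty with rfl | hne
  · have hbot : G.edgeFinset = ∅ := by
      simpa [eq_bot_iff_forall_not_adj] using hW
    simp [hbot]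
  have : Nonempty (W : Set V) := hne.to_subtype
  obtain ⟨F, hGF, -, hF⟩ := connected_top.exists_isTree_le_of_le_of_isAcyclic
    (le_top (a := G.induce W)) (hG.induce _)
  have hsub : G.edgeFinset ⊆ F.edgeFinset.image (Sym2.map Subtype.val) := by
    intro e he
    induction e with | _ u v
    have huv : G.Adj u v := by simpa using he
    have hadj : F.Adj ⟨u, hW u v huv⟩ ⟨v, hW v u huv.symm⟩ := hGF huv
    exact Finset.mem_image.2 ⟨s(_, _), mem_edgeFinset.2 hadj, rfl⟩
  have hcard : F.edgeFinset.card + 1 = W.card := hF.card_edgeFinset.trans (by simp)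
  exact (Finset.card_le_card hsub).trans (Finset.card_image_le.trans (by lia))

lemma degree_crossGraph_phaseOne_le [Fintype α] (v : V) :
    (crossGraph col (phaseOne T B col h)).degree v ≤ T.degree (col v) := by
  rw [← card_neighborFinset_eq_degree, ← card_neighborFinset_eq_degree]
  refine Finset.card_le_card_of_injOn col ?_ ?_
  · intro w hw
    obtain ⟨hadj, hne⟩ := (mem_neighborFinset ..).1 hw
    simpa using (phaseOne_adj_col hadj).resolve_right fun h => hne h.1
  · intro w hw w' hw' heq
    obtain ⟨hadj, hne⟩ := (mem_neighborFinset ..).1 hw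
    exact phaseOne_cross_matching hadj ((mem_neighborFinset ..).1 hw').1 hne heq

lemma degree_eq_degree_cross_add_degree_mono (col : V → α) (G : SimpleGraph V) (v : V) :
    G.degree v = (crossGraph col G).degree v + (monoGraph col G).degree v := by
  simp only [← card_neighborFinset_eq_degree]
  rw [← Finset.card_union_of_disjoint]
  · congr 1
    ext w
    simp only [mem_neighborFinset, Finset.mem_union]
    exact (and_iff_left (ne_or_eq (col v) (col w))).symm.trans and_or_left
  · refine Finset.disjoint_left.2 fun w hcross hmono => ?_
    exact ((mem_neighborFinset ..).1 hcross).2 ((mem_neighborFinset ..).1 hmono).2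

lemma two_mul_card_edgeFinset_phaseOne_le [Fintype α] {d : ℕ} (hT : ∀ c, T.degree c ≤ d) :
    2 * (phaseOne T B col h).edgeFinset.card ≤
      d * Fintype.card V + 2 * (Finset.univ.filter (col · ∈ B)).card := by
  set G := phaseOne T B col h
  have hmono : (monoGraph col G).edgeFinset.card ≤ (Finset.univ.filter (col · ∈ B)).card :=
    card_edgeFinset_le_of_isAcyclic isAcyclic_monoGraph_phaseOne fun u v huv => by
      simpa using ((phaseOne_adj_col huv.1).resolve_left fun hadj => hadj.ne huv.2).2
  have hcross : ∑ v, (crossGraph col G).degree v ≤ ∑ _v : V, d :=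
    Finset.sum_le_sum fun v _ => (degree_crossGraph_phaseOne_le v).trans (hT _)
  rw [← sum_degrees_eq_twice_card_edges]
  simp only [degree_eq_degree_cross_add_degree_mono col G]
  rw [Finset.sum_add_distrib, sum_degrees_eq_twice_card_edges (monoGraph col G)]
  rw [Finset.sum_const, Finset.card_univ, smul_eq_mul, mul_comm] at hcross
  exact Nat.add_le_add hcross (Nat.mul_le_mul_left 2 hmono)

end PhaseOne

section Expansion

variable {V α : Type*}

/-- No two disjoint sets of `g` vertices each are without an edge of `l` between them. -/
def HasNoBipartiteHole (g : ℕ) (l : List (Sym2 V)) : Prop :=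
  ∀ P Q : Finset V, Disjoint P Q → g ≤ P.card → g ≤ Q.card → ∃ p ∈ P, ∃ q ∈ Q, s(p, q) ∈ l

/-- The closed neighbourhood of a set of vertices. -/
def thicken [Fintype V] (H : SimpleGraph V) (D : Finset V) : Finset V :=
  D ∪ D.biUnion fun v => H.neighborFinset v

/-- The vertices of colour `c` without a neighbour of colour `c'`. -/
def unmatched [Fintype V] (col : V → α) (G : SimpleGraph V) (c c' : α) : Finset V :=
  Finset.univ.filter fun v => col v = c ∧ ∀ w, G.Adj v w → col w ≠ c'

/-- The vertices of `Y` cannot be separated from each other in `G` by fewer than `d` vertices. -/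
def Linked (d : ℕ) (G : SimpleGraph V) (Y : Finset V) : Prop :=
  ∀ S : Finset V, S.card ≤ d - 1 → ∀ u ∈ Y, u ∉ S → ∀ v ∈ Y, v ∉ S → (avoiding G S).Reachable u v

lemma Linked.mono {d : ℕ} {G H : SimpleGraph V} {Y : Finset V} (hY : Linked d G Y) (hGH : G ≤ H) :
    Linked d H Y :=
  fun S hS u hu huS v hv hvS => (hY S hS u hu huS v hv hvS).mono (avoiding_mono hGH S)

section Giant

variable {g : ℕ} {l : List (Sym2 V)} {r : V → V → Prop} {W : Finset V}

lemma card_lt_of_closed (hl : HasNoBipartiteHole g l)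
    (hlr : ∀ u ∈ W, ∀ v ∈ W, s(u, v) ∈ l → r u v) {P : Finset V} (hPW : P ⊆ W)
    (hP : ∀ u ∈ P, ∀ v ∈ W, r u v → v ∈ P) (hg : g ≤ P.card) : (W \ P).card < g := by
  by_contra! hlarge
  obtain ⟨p, hp, q, hq, hpq⟩ := hl P (W \ P) Finset.disjoint_sdiff hg hlarge
  obtain ⟨hqW, hqP⟩ := Finset.mem_sdiff.1 hq
  exact hqP (hP p hp q hqW (hlr p (hPW hp) q hqW hpq))

/-- A smallest union `P` of classes with at least `g` elements consists of one class and fewer than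
`g` further elements, while fewer than `g` elements lie outside `P`; so that class has more than `g`
elements itself. -/
lemma exists_giant_class (hr : Equivalence r) (hl : HasNoBipartiteHole g l)
    (hlr : ∀ u ∈ W, ∀ v ∈ W, s(u, v) ∈ l → r u v) (hg : 0 < g) (hW : 3 * g ≤ W.card) :
    ∃ x ∈ W, (W.filter (¬ r x ·)).card < g := by
  obtain ⟨P, hPmem, hPmin⟩ := Finset.exists_min_image
    (W.powerset.filter fun P => (∀ u ∈ P, ∀ v ∈ W, r u v → v ∈ P) ∧ g ≤ P.card) Finset.card
    ⟨W, by simpa using ⟨fun _ _ _ hv _ => hv, by lia⟩⟩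
  simp only [Finset.mem_filter, Finset.mem_powerset] at hPmem hPmin
  obtain ⟨hPW, hP, hPg⟩ := hPmem
  obtain ⟨x, hx⟩ := Finset.card_pos.1 (hg.trans_le hPg)
  have hrest : (P.filter (¬ r x ·)).card < g := by
    by_contra! hlarge
    have hlt : (P.filter (¬ r x ·)).card < P.card :=
      Finset.card_lt_card (Finset.filter_ssubset.2 ⟨x, hx, not_not.2 (hr.refl x)⟩)
    refine hlt.not_ge (hPmin _ ⟨(Finset.filter_subset _ _).trans hPW, ?_, hlarge⟩)
    intro u hu v hv huv
    obtain ⟨huP, hxu⟩ := Finset.mem_filter.1 hu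
    exact Finset.mem_filter.2 ⟨hP u huP v hv huv, fun hxv => hxu (hr.trans hxv (hr.symm huv))⟩
  have hout := card_lt_of_closed hl hlr hPW hP hPg
  have hclass : g ≤ (W.filter (r x ·)).card := by
    have hsub : P.filter (r x ·) ⊆ W.filter (r x ·) := Finset.filter_subset_filter _ hPW
    have := Finset.card_le_card hsub
    have := Finset.card_filter_add_card_filter_not (s := P) (r x ·)
    have := Finset.card_sdiff_add_card_eq_card hPW
    lia
  refine ⟨x, hPW hx, ?_⟩
  rw [Finset.filter_not]
  refine card_lt_of_closed hl hlr (Finset.filter_subset _ _) (fun u hu v hv huv => ?_) hclass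
  exact Finset.mem_filter.2 ⟨hv, hr.trans (Finset.mem_filter.1 hu).2 huv⟩

end Giant

section Thicken

variable [Fintype V] {H : SimpleGraph V} {D : Finset V}

lemma card_thicken_iterate_le {d : ℕ} (hH : ∀ v, H.degree v ≤ d) (i : ℕ) :
    ((thicken H)^[i] D).card ≤ (1 + d) ^ i * D.card := by
  induction i with
  | zero => simp
  | succ i ih =>
    rw [Function.iterate_succ_apply']
    set E := (thicken H)^[i] D
    calc (thicken H E).card ≤ E.card + E.card * d :=
          (Finset.card_union_le _ _).trans (Nat.add_le_add_left
            (Finset.card_biUnion_le_card_mul _ _ _ fun v _ => by simpa using hH v) _)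
      _ = (1 + d) * E.card := by ring
      _ ≤ (1 + d) * ((1 + d) ^ i * D.card) := Nat.mul_le_mul_left _ ih
      _ = (1 + d) ^ (i + 1) * D.card := by ring

lemma thicken_iterate_mono {i j : ℕ} (hij : i ≤ j) :
    (thicken H)^[i] D ⊆ (thicken H)^[j] D :=
  monotone_nat_of_le_succ (f := fun i => (thicken H)^[i] D) (fun i => by
    rw [Function.iterate_succ_apply']
    exact Finset.subset_union_left) hij

lemma notMem_of_adj_of_notMem_thicken {i : ℕ} {u v : V} (hu : u ∉ (thicken H)^[i + 1] D)
    (huv : H.Adj u v) : v ∉ (thicken H)^[i] D := by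
  intro hv
  rw [Function.iterate_succ_apply'] at hu
  exact hu (Finset.mem_union_right _ (Finset.mem_biUnion.2 ⟨v, hv, by simpa using huv.symm⟩))

end Thicken

end Expansion

section Linking

variable {V α : Type*} {T : SimpleGraph α} {B : Finset α} {col : V → α} {l : List (Sym2 V)}
  {g : ℕ}

lemma reachable_avoiding_of_reachable_monoGraph {G : SimpleGraph V} {S : Finset V} {u v : V}
    (huv : (monoGraph col G).Reachable u v) (hu : col u ∉ S.image col) :
    (avoiding G S).Reachable u v := by
  have hnot {x : V} (hx : col x ∉ S.image col) : x ∉ S :=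
    fun hxS => hx (Finset.mem_image_of_mem col hxS)
  obtain ⟨p⟩ := huv
  induction p with
  | nil => rfl
  | cons hadj _ ih =>
    have hv := hadj.2 ▸ hu
    have hstep : (avoiding G S).Adj _ _ := ⟨hadj.1, hnot hu, hnot hv⟩
    exact hstep.reachable.trans (ih hv)

variable [Fintype V]

lemma card_unmatched_le (hl : HasNoBipartiteHole g l) {c c' : α} (hcc' : T.Adj c c')
    (hbal : (Finset.univ.filter (col · = c)).card ≤ (Finset.univ.filter (col · = c')).card + 1) :
    (unmatched col (phaseOne T B col l) c c').card ≤ g := by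
  set G := phaseOne T B col l
  let matched (a b : α) : Finset V :=
    Finset.univ.filter fun v => col v = a ∧ ∃ w, G.Adj v w ∧ col w = b
  have hsplit (a b : α) : (matched a b).card + (unmatched col G a b).card =
      (Finset.univ.filter (col · = a)).card := by
    rw [← Finset.card_filter_add_card_filter_not (s := Finset.univ.filter (col · = a))
      fun v => ∃ w, G.Adj v w ∧ col w = b]
    simp only [Finset.filter_filter, matched, unmatched, not_exists, not_and, ne_eq]
  have hmatch : (matched c' c).card ≤ (matched c c').card := by
    choose! f hf using fun v (hv : v ∈ matched c' c) => (Finset.mem_filter.1 hv).2.2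
    refine Finset.card_le_card_of_injOn f (fun v hv => ?_) fun v hv v' hv' heq => ?_
    · simp only [matched, Finset.coe_filter, Finset.mem_univ, true_and]
      exact ⟨(hf v hv).2, v, (hf v hv).1.symm, (Finset.mem_filter.1 hv).2.1⟩
    · have hcol := (Finset.mem_filter.1 hv).2.1
      have hcol' := (Finset.mem_filter.1 hv').2.1
      refine phaseOne_cross_matching (hf v hv).1.symm (heq ▸ (hf v' hv').1.symm) ?_
        (hcol.trans hcol'.symm)
      rw [(hf v hv).2, hcol]
      exact hcc'.ne
  have hsmall : (unmatched col G c c').card < g ∨ (unmatched col G c' c).card < g := by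
    by_contra! hlarge
    obtain ⟨p, hp, q, hq, hpq⟩ := hl _ _ (Finset.disjoint_left.2 fun v hv hv' =>
      hcc'.ne ((Finset.mem_filter.1 hv).2.1.symm.trans (Finset.mem_filter.1 hv').2.1))
      hlarge.1 hlarge.2
    obtain ⟨-, rfl, hp'⟩ := Finset.mem_filter.1 hp
    obtain ⟨-, rfl, hq'⟩ := Finset.mem_filter.1 hq
    rcases exists_adj_of_mem_of_adj_col (B := B) hpq hcc' with ⟨w, hw⟩ | ⟨w, hw⟩
    exacts [hp' w hw.1 hw.2, hq' w hw.1 hw.2]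
  have := hsplit c c'
  have := hsplit c' c
  lia

lemma exists_lift_walk {G : SimpleGraph V} {S D : Finset V}
    (hD : ∀ c c', T.Adj c c' → unmatched col G c c' ⊆ D) {c b : α} (p : T.Walk c b)
    (hp : ∀ x ∈ p.support.tail, x ∉ S.image col) {v : V} (hv : col v = c) (hvS : v ∉ S)
    (hvD : v ∉ (thicken (crossGraph col G))^[p.length] D) :
    ∃ w, col w = b ∧ w ∉ D ∧ (avoiding G S).Reachable v w := by
  induction p generalizing v with
  | nil => exact ⟨v, hv, hvD, .rfl⟩
  | @cons c c' b hcc' p ih =>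
    subst hv
    have hmatched : v ∉ unmatched col G (col v) c' := fun hmem =>
      hvD (thicken_iterate_mono (Nat.zero_le _) (hD _ _ hcc' hmem))
    obtain ⟨w, hvw, rfl⟩ : ∃ w, G.Adj v w ∧ col w = c' := by simpa [unmatched] using hmatched
    rw [Walk.support_cons, List.tail_cons] at hp
    have hwS : w ∉ S := fun h => hp _ p.start_mem_support (Finset.mem_image_of_mem col h)
    obtain ⟨z, hz, hzD, hwz⟩ := ih (fun x hx => hp x (List.mem_of_mem_tail hx)) rfl hwS
      (notMem_of_adj_of_notMem_thicken hvD ⟨hvw, hcc'.ne⟩)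
    have hstep : (avoiding G S).Adj v w := ⟨hvw, hvS, hwS⟩
    exact ⟨z, hz, hzD, hstep.reachable.trans hwz⟩

lemma linked_compl_thicken [Fintype α] {d : ℕ} (hd : 1 ≤ d) (hT : IsKConnected d T)
    (hB : d ≤ B.card) {G : SimpleGraph V} {D : Finset V}
    (hD : ∀ c c', T.Adj c c' → unmatched col G c c' ⊆ D)
    {hub : α → V} (hhub : ∀ v, col v ∈ B → v ∉ D → (monoGraph col G).Reachable (hub (col v)) v) :
    Linked d G ((thicken (crossGraph col G))^[Fintype.card α] D)ᶜ := by
  intro S hS u hu huS v hv hvS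
  have hcolS : (S.image col).card ≤ d - 1 := Finset.card_image_le.trans hS
  obtain ⟨b, hbB, hb⟩ : ∃ b ∈ B, b ∉ S.image col :=
    Finset.exists_mem_notMem_of_card_lt_card (by lia)
  have hlift (x : V) (hx : x ∈ ((thicken (crossGraph col G))^[Fintype.card α] D)ᶜ) (hxS : x ∉ S) :
      ∃ w, col w = b ∧ (avoiding G S).Reachable x w ∧ (monoGraph col G).Reachable (hub b) w := by
    obtain ⟨p, hlen, hp⟩ := hT.exists_walk_avoiding hd hcolS (col x) hb
    obtain ⟨w, rfl, hwD, hxw⟩ := exists_lift_walk hD p hp rfl hxS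
      fun h => Finset.mem_compl.1 hx (thicken_iterate_mono hlen h)
    exact ⟨w, rfl, hxw, hhub w hbB hwD⟩
  obtain ⟨w, rfl, huw, hw⟩ := hlift u hu huS
  obtain ⟨z, -, hvz, hz'⟩ := hlift v hv hvS
  exact huw.trans <|
    (reachable_avoiding_of_reachable_monoGraph (hw.symm.trans hz') hb).trans hvz.symm

lemma exists_hub {b : α} (hb : b ∈ B) (hg : 0 < g)
    (hlarge : 3 * g ≤ (Finset.univ.filter (col · = b)).card) (hl : HasNoBipartiteHole g l) :
    ∃ x, ((Finset.univ.filter (col · = b)).filter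
      (¬ (monoGraph col (phaseOne T B col l)).Reachable x ·)).card < g := by
  obtain ⟨x, -, hx⟩ := exists_giant_class
    (monoGraph col (phaseOne T B col l)).reachable_is_equivalence hl
    (fun u hu v hv huv => reachable_monoGraph_phaseOne huv (by simp_all) (by simp_all)) hg hlarge
  exact ⟨x, by convert hx⟩

lemma exists_linked_phaseOne [Fintype α] {d : ℕ} (hd : 1 ≤ d) (hT : IsKConnected d T)
    (hdeg : ∀ c, T.degree c ≤ d) (hB : d ≤ B.card) (hg : 0 < g)
    (hbal : ∀ c c', (Finset.univ.filter (col · = c)).card ≤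
      (Finset.univ.filter (col · = c')).card + 1)
    (hlarge : ∀ c, 3 * g ≤ (Finset.univ.filter (col · = c)).card)
    (hl : HasNoBipartiteHole g l) :
    ∃ Y, Linked d (phaseOne T B col l) Y ∧ Fintype.card V ≤ Y.card +
      (1 + d) ^ Fintype.card α * ((Fintype.card α ^ 2 + Fintype.card α) * g) := by
  set G := phaseOne T B col l
  have : Nonempty V := by
    obtain ⟨b, -⟩ := Finset.card_pos.1 (hd.trans hB)
    exact (Finset.card_pos.1 ((by lia : 0 < 3 * g).trans_le (hlarge b))).to_type
  choose! hub hhub using fun (b : α) (hb : b ∈ B) =>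
    exists_hub (T := T) hb hg (hlarge b) hl
  let holes : Finset V := (Finset.univ : Finset (α × α)).biUnion fun c =>
    if T.Adj c.1 c.2 then unmatched col G c.1 c.2 else ∅
  let stray : Finset V := B.biUnion fun b =>
    (Finset.univ.filter (col · = b)).filter (¬ (monoGraph col G).Reachable (hub b) ·)
  have hholes : holes.card ≤ Fintype.card α ^ 2 * g := by
    rw [sq, ← Fintype.card_prod, ← Finset.card_univ]
    refine Finset.card_biUnion_le_card_mul _ _ _ fun c _ => ?_
    split_ifs with hc
    exacts [card_unmatched_le hl hc (hbal _ _), by simp]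
  have hstray : stray.card ≤ Fintype.card α * g :=
    (Finset.card_biUnion_le_card_mul _ _ _ fun b hb => (hhub b hb).le).trans
      (Nat.mul_le_mul_right _ (Finset.card_le_univ B))
  refine ⟨_, linked_compl_thicken (col := col) (D := holes ∪ stray) (hub := hub) hd hT hB ?_ ?_, ?_⟩
  · intro c c' hcc' v hv
    exact Finset.mem_union_left _
      (Finset.mem_biUnion.2 ⟨(c, c'), by simp, by simpa [hcc'] using hv⟩)
  · intro v hvB hvD
    by_contra hnot
    exact hvD (Finset.mem_union_right _
      (Finset.mem_biUnion.2 ⟨col v, hvB, by simpa using hnot⟩))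
  · have hthick := card_thicken_iterate_le (H := crossGraph col G) (D := holes ∪ stray)
      (fun v => (degree_crossGraph_phaseOne_le (T := T) (B := B) (h := l) v).trans (hdeg _))
      (Fintype.card α)
    have hbad : (holes ∪ stray).card ≤ (Fintype.card α ^ 2 + Fintype.card α) * g := by
      rw [add_mul]
      exact (Finset.card_union_le _ _).trans (Nat.add_le_add hholes hstray)
    rw [← Finset.card_compl_add_card ((thicken (crossGraph col G))^[Fintype.card α] _)]
    exact Nat.add_le_add_left (hthick.trans (Nat.mul_le_mul_left _ hbad)) _

end Linking

/-! ### The second phase -/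

section PhaseTwo

variable {V : Type*} [Fintype V] {d m : ℕ} {Y : Finset V} {h : List (Sym2 V)}

/-- Admission rule of the second phase: join a vertex outside `Y` to `Y` as long as it has fewer
than `d` neighbours. -/
def phaseTwoRule (d : ℕ) (Y : Finset V) (G : SimpleGraph V) (x y : V) : Prop :=
  x ∉ Y ∧ y ∈ Y ∧ G.degree x < d

/-- The second phase: give every vertex outside `Y` up to `d` neighbours in `Y`. -/
def phaseTwo (d : ℕ) (Y : Finset V) (h : List (Sym2 V)) : SimpleGraph V :=
  greedy (phaseTwoRule d Y) h

lemma phaseTwo_adj_mem_iff {u v : V} (huv : (phaseTwo d Y h).Adj u v) : u ∉ Y ↔ v ∈ Y := by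
  refine greedy_induction (P := fun G => ∀ u v, G.Adj u v → (u ∉ Y ↔ v ∈ Y))
    (fun u v huv => huv.elim) (fun G x y ih hR u v huv => ?_) h u v huv
  rcases huv with huv | huv
  · exact ih u v huv
  · have hxy := hR.1
    have hyY := hR.2.1
    rw [edge_adj] at huv
    rcases huv.1 with ⟨rfl, rfl⟩ | ⟨rfl, rfl⟩ <;> tauto

lemma degree_phaseTwo_le {x : V} (hx : x ∉ Y) : (phaseTwo d Y h).degree x ≤ d := by
  refine greedy_induction (P := fun G => ∀ x ∉ Y, G.degree x ≤ d) (fun x _ => by simp)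
    (fun G u v ih hR x hx => ?_) h x hx
  have hxv : x ≠ v := fun hxv => hx (hxv ▸ hR.2.1)
  by_cases hxu : x = u
  · subst hxu
    have hsub : (G ⊔ edge x v).neighborFinset x ⊆ insert v (G.neighborFinset x) := by
      intro w
      simp only [mem_neighborFinset, sup_adj, edge_adj, Finset.mem_insert]
      tauto
    have hcard : ((G ⊔ edge x v).neighborFinset x).card ≤ d :=
      (Finset.card_le_card hsub).trans <| (Finset.card_insert_le _ _).trans <| by
        simpa using hR.2.2
    rw [← card_neighborFinset_eq_degree]
    convert hcard
  · convert ih x hx using 1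
    simp only [← card_neighborFinset_eq_degree]
    congr 1
    ext w
    simp only [mem_neighborFinset, sup_adj, edge_adj]
    tauto

lemma card_edgeFinset_phaseTwo_le : (phaseTwo d Y h).edgeFinset.card ≤ d * Yᶜ.card := by
  have hcover : (phaseTwo d Y h).edgeFinset ⊆
      Yᶜ.biUnion fun x => (phaseTwo d Y h).incidenceFinset x := by
    intro e
    induction e with | _ u v
    intro huv
    rw [mem_edgeFinset, mem_edgeSet] at huv
    by_cases hu : u ∈ Y
    · have hv : v ∉ Y := fun hv => (phaseTwo_adj_mem_iff huv).2 hv hu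
      exact Finset.mem_biUnion.2 ⟨v, by simpa using hv, by simpa [incidenceSet] using huv⟩
    · exact Finset.mem_biUnion.2 ⟨u, by simpa using hu, by simpa [incidenceSet] using huv⟩
  rw [mul_comm]
  refine (Finset.card_le_card hcover).trans (Finset.card_biUnion_le_card_mul _ _ _ fun x hx => ?_)
  rw [card_incidenceFinset_eq_degree]
  exact degree_phaseTwo_le (Finset.mem_compl.1 hx)

lemma le_card_filter_phaseTwo_adj {x : V} (hx : x ∉ Y)
    (hd : d ≤ (Y.filter fun y => s(x, y) ∈ h).card) :
    d ≤ (Y.filter fun y => (phaseTwo d Y h).Adj x y).card := by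
  by_cases hfull : ∃ G ≤ phaseTwo d Y h, d ≤ G.degree x
  · obtain ⟨G, hG, hdeg⟩ := hfull
    refine hdeg.trans (Finset.card_le_card fun y hy => ?_)
    have hxy : (phaseTwo d Y h).Adj x y := hG (by simpa using hy)
    exact Finset.mem_filter.2 ⟨(phaseTwo_adj_mem_iff hxy).1 hx, hxy⟩
  · refine hd.trans (Finset.card_le_card fun y hy => ?_)
    obtain ⟨hyY, hmem⟩ := Finset.mem_filter.1 hy
    refine Finset.mem_filter.2 ⟨hyY, ?_⟩
    rcases greedy_adj_or_not_rule hmem (ne_of_mem_of_not_mem hyY hx).symm with hadj | ⟨G, hG, hR⟩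
    · exact hadj
    · exact absurd ⟨G, hG, not_lt.1 fun hlt => hR ⟨hx, hyY, hlt⟩⟩ hfull

lemma isKConnected_of_linked {G : SimpleGraph V} (hd : 1 ≤ d) (hV : d + 1 ≤ Fintype.card V)
    (hY : Linked d G Y) (hout : ∀ x ∉ Y, d ≤ (Y.filter (G.Adj x)).card) : IsKConnected d G := by
  refine isKConnected_iff_avoiding.2 ⟨hV, fun S hS u hu v hv => ?_⟩
  have henter (x : V) (hx : x ∉ S) : ∃ y ∈ Y, y ∉ S ∧ (avoiding G S).Reachable x y := by
    by_cases hxY : x ∈ Y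
    · exact ⟨x, hxY, hx, .rfl⟩
    · obtain ⟨y, hy, hyS⟩ : ∃ y ∈ Y.filter (G.Adj x), y ∉ S :=
        Finset.exists_mem_notMem_of_card_lt_card (by have := hout x hxY; lia)
      obtain ⟨hyY, hxy⟩ := Finset.mem_filter.1 hy
      have hstep : (avoiding G S).Adj x y := ⟨hxy, hx, hyS⟩
      exact ⟨y, hyY, hyS, hstep.reachable⟩
  obtain ⟨y, hyY, hyS, huy⟩ := henter u hu
  obtain ⟨z, hzY, hzS, hvz⟩ := henter v hv
  exact huy.trans ((hY S hS y hyY hyS z hzY hzS).trans hvz.symm)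

/-- A set of vertices linked in `G` and missing at most `m` vertices, if there is one, and the set
of all vertices otherwise. -/
def linkedCore (d m : ℕ) (G : SimpleGraph V) : Finset V :=
  if h : ∃ Y, Linked d G Y ∧ Fintype.card V ≤ Y.card + m then h.choose else Finset.univ

lemma card_le_card_linkedCore_add (G : SimpleGraph V) :
    Fintype.card V ≤ (linkedCore d m G).card + m := by
  unfold linkedCore
  split_ifs with h
  · exact h.choose_spec.2
  · simp

lemma linked_linkedCore {G : SimpleGraph V}
    (h : ∃ Y, Linked d G Y ∧ Fintype.card V ≤ Y.card + m) : Linked d G (linkedCore d m G) := by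
  rw [linkedCore, dif_pos h]
  exact h.choose_spec.1

end PhaseTwo

section Builder

variable {V α : Type*} [Fintype V] {T : SimpleGraph α} {B : Finset α} {col : V → α}
  {d L m : ℕ} {h : List (Sym2 V)}

/-- The two-phase construction: during the first `L` rounds build a graph in which almost all
vertices are linked, afterwards attach the remaining vertices. -/
def assemble (T : SimpleGraph α) (B : Finset α) (col : V → α) (d L m : ℕ) :
    List (Sym2 V) → SimpleGraph V :=
  twoPhase L (phaseOne T B col) fun G => phaseTwo d (linkedCore d m G)

lemma isOnline_assemble : IsOnline (assemble T B col d L m) :=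
  isOnline_twoPhase isOnline_greedy fun _ => isOnline_greedy

lemma two_mul_card_edgeFinset_assemble_le [Fintype α] (hT : ∀ c, T.degree c ≤ d) :
    2 * (assemble T B col d L m h).edgeFinset.card ≤
      d * Fintype.card V + 2 * (Finset.univ.filter (col · ∈ B)).card + 2 * (d * m) := by
  set G := phaseOne T B col (h.take L)
  have hsup : (assemble T B col d L m h).edgeFinset.card ≤
      G.edgeFinset.card + (phaseTwo d (linkedCore d m G) (h.drop L)).edgeFinset.card := by
    refine (Finset.card_le_card ?_).trans (Finset.card_union_le _ _)
    rw [← edgeFinset_sup]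
    exact edgeFinset_mono le_rfl
  have hone : 2 * G.edgeFinset.card ≤ d * Fintype.card V +
      2 * (Finset.univ.filter (col · ∈ B)).card := by
    convert two_mul_card_edgeFinset_phaseOne_le (B := B) (col := col) (h := h.take L) hT
  have htwo := card_edgeFinset_phaseTwo_le (d := d) (Y := linkedCore d m G) (h := h.drop L)
  have hcompl : (linkedCore d m G)ᶜ.card ≤ m := by
    have := card_le_card_linkedCore_add (d := d) (m := m) G
    rw [Finset.card_compl]
    lia
  have := htwo.trans (Nat.mul_le_mul_left d hcompl)
  lia

lemma isKConnected_assemble (hd : 1 ≤ d) (hV : d + 1 ≤ Fintype.card V)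
    (hlink : ∃ Y, Linked d (phaseOne T B col (h.take L)) Y ∧ Fintype.card V ≤ Y.card + m)
    (hout : ∀ x ∉ linkedCore d m (phaseOne T B col (h.take L)),
      d ≤ ((linkedCore d m (phaseOne T B col (h.take L))).filter
        fun y => s(x, y) ∈ h.drop L).card) :
    IsKConnected d (assemble T B col d L m h) := by
  refine isKConnected_of_linked hd hV ((linked_linkedCore hlink).mono le_sup_left) fun x hx => ?_
  refine (le_card_filter_phaseTwo_adj hx (hout x hx)).trans (Finset.card_le_card ?_)
  exact Finset.monotone_filter_right _ fun y _ hxy => le_sup_right (α := SimpleGraph V) hxy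

end Builder

/-! ### Random edge orderings -/

section Pr

variable {α : Type*} [Fintype α] {P Q : α → Prop}

lemma Pr_le_one (P : α → Prop) : Pr P ≤ 1 :=
  div_le_one_of_le₀ (mod_cast Finset.card_filter_le _ _) (Nat.cast_nonneg _)

lemma Pr_mono (hPQ : ∀ a, P a → Q a) : Pr P ≤ Pr Q :=
  div_le_div_of_nonneg_right
    (mod_cast Finset.card_le_card (Finset.monotone_filter_right _ fun a _ => hPQ a))
    (Nat.cast_nonneg _)

lemma Pr_or_le (P Q : α → Prop) : Pr (fun a => P a ∨ Q a) ≤ Pr P + Pr Q := by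
  rw [Pr, Pr, Pr, ← add_div]
  refine div_le_div_of_nonneg_right (mod_cast ?_) (Nat.cast_nonneg _)
  refine (Finset.card_le_card fun a ha => ?_).trans (Finset.card_union_le _ _)
  simpa using ha

lemma Pr_exists_le {ι : Type*} [Fintype ι] (P : ι → α → Prop) :
    Pr (fun a => ∃ i, P i a) ≤ ∑ i, Pr (P i) := by
  simp only [Pr, ← Finset.sum_div]
  refine div_le_div_of_nonneg_right (mod_cast ?_) (Nat.cast_nonneg _)
  refine (Finset.card_le_card fun a ha => ?_).trans Finset.card_biUnion_le
  simpa using ha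

lemma one_sub_Pr_not_le [Nonempty α] (P : α → Prop) : 1 - Pr (fun a => ¬ P a) ≤ Pr P := by
  have hcard : (Fintype.card α : ℝ) ≠ 0 := Nat.cast_ne_zero.2 Fintype.card_ne_zero
  rw [sub_le_iff_le_add, Pr, Pr, ← add_div, ← Nat.cast_add,
    Finset.card_filter_add_card_filter_not, Finset.card_univ, div_self hcard]

lemma mul_Pr_le_average {c : ℝ} {Φ : α → ℝ} (hΦ : ∀ a, 0 ≤ Φ a) (hP : ∀ a, P a → c ≤ Φ a) :
    c * Pr P ≤ (∑ a, Φ a) / Fintype.card α := by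
  rw [Pr, mul_div_assoc']
  refine div_le_div_of_nonneg_right ?_ (Nat.cast_nonneg _)
  calc c * (Finset.univ.filter P).card = ∑ _a ∈ Finset.univ.filter P, c := by
        rw [Finset.sum_const, nsmul_eq_mul, mul_comm]
    _ ≤ ∑ a ∈ Finset.univ.filter P, Φ a :=
        Finset.sum_le_sum fun a ha => hP a (Finset.mem_filter.1 ha).2
    _ ≤ ∑ a, Φ a := Finset.sum_le_univ_sum_of_nonneg hΦ

end Pr

section Unseen

variable {n : ℕ}

instance : Nonempty (EdgeOrdering n) := ⟨Fintype.equivFin _⟩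

/-- The edges of `K_n` that do not occur in the history `h`. -/
def unseen (h : List (Sym2 (Fin n))) : Finset (Sym2 (Fin n)) :=
  Finset.univ.filter fun e => ¬ e.IsDiag ∧ e ∉ h

lemma proposal_injective (σ : EdgeOrdering n) : Function.Injective (proposal σ) :=
  Subtype.val_injective.comp σ.symm.injective

lemma not_isDiag_proposal (σ : EdgeOrdering n) (r : Fin (numEdges n)) :
    ¬ (proposal σ r).IsDiag :=
  not_isDiag_of_mem_edgeSet _ (σ.symm r).2

lemma exists_proposal_eq (σ : EdgeOrdering n) {e : Sym2 (Fin n)} (he : ¬ e.IsDiag) :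
    ∃ r, proposal σ r = e :=
  ⟨σ ⟨e, by simpa [completeGraph] using he⟩, by simp [proposal]⟩

lemma unseen_history (σ : EdgeOrdering n) (t : Fin (numEdges n)) :
    unseen (history σ t) = (Finset.Ici t).image (proposal σ) := by
  ext e
  simp only [unseen, Finset.mem_filter, Finset.mem_univ, true_and, mem_history_iff, not_exists,
    not_and, Finset.mem_image, Finset.mem_Ici]
  constructor
  · rintro ⟨he, hnew⟩
    obtain ⟨r, rfl⟩ := exists_proposal_eq σ he
    exact ⟨r, not_lt.1 fun hr => hnew r hr rfl, rfl⟩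
  · rintro ⟨r, hr, rfl⟩
    exact ⟨not_isDiag_proposal σ r, fun r' hr' heq =>
      (hr'.trans_le hr).ne (congrArg _ (proposal_injective σ heq))⟩

lemma card_unseen_history (σ : EdgeOrdering n) {t : ℕ} (ht : t < numEdges n) :
    ((unseen (history σ t)).card : ℝ) = numEdges n - t := by
  rw [unseen_history σ ⟨t, ht⟩, Finset.card_image_of_injective _ (proposal_injective σ),
    Fin.card_Ici, Nat.cast_sub ht.le]

lemma history_trans_swap (σ : EdgeOrdering n) {s : ℕ} {t i : Fin (numEdges n)} (hst : s ≤ t)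
    (hti : t ≤ i) : history (σ.trans (Equiv.swap t i)) s = history σ s := by
  refine List.map_congr_left fun r hr => ?_
  have hrt : r < t := by
    have : (r : ℕ) < s := by simpa using hr
    exact this.trans_le hst
  rw [Equiv.symm_trans_apply, Equiv.symm_swap,
    Equiv.swap_apply_of_ne_of_ne hrt.ne (hrt.trans_le hti).ne]

lemma history_trans_swap_succ (σ : EdgeOrdering n) {t i : Fin (numEdges n)} (hti : t ≤ i) :
    history (σ.trans (Equiv.swap t i)) (t + 1) = history σ t ++ [proposal σ i] := by
  have hlast : proposal (σ.trans (Equiv.swap t i)) t = proposal σ i := by simp [proposal]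
  rw [history_succ, hlast, history_trans_swap σ le_rfl hti]

/-- Given the first `t` edges, the next one is uniformly distributed on the unseen edges. -/
lemma sum_history_succ {L t : ℕ} (hLt : L ≤ t) (ht : t < numEdges n)
    (Φ : List (Sym2 (Fin n)) → List (Sym2 (Fin n)) → ℝ) :
    (numEdges n - t) * ∑ σ : EdgeOrdering n, Φ (history σ L) (history σ (t + 1)) =
      ∑ σ : EdgeOrdering n, ∑ e ∈ unseen (history σ t), Φ (history σ L) (history σ t ++ [e]) := by
  lift t to Fin (numEdges n) using ht
  have hswap (i : Fin (numEdges n)) (hi : i ∈ Finset.Ici t) :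
      ∑ σ : EdgeOrdering n, Φ (history σ L) (history σ t ++ [proposal σ i]) =
        ∑ σ : EdgeOrdering n, Φ (history σ L) (history σ (t + 1)) := by
    have hti := Finset.mem_Ici.1 hi
    exact (Finset.sum_congr rfl fun σ _ => congrArg₂ Φ (history_trans_swap σ hLt hti).symm
      (history_trans_swap_succ σ hti).symm).trans
      ((Equiv.equivCongr (.refl _) (Equiv.swap t i)).sum_comp
        fun σ => Φ (history σ L) (history σ (t + 1)))
  simp only [unseen_history, Finset.sum_image fun _ _ _ _ => (proposal_injective _).eq_iff.1]
  rw [Finset.sum_comm, Finset.sum_congr rfl hswap, Finset.sum_const, Fin.card_Ici, nsmul_eq_mul,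
    Nat.cast_sub t.2.le]

lemma average_history_le {L T : ℕ} (hLT : L ≤ T) (hT : T ≤ numEdges n) {ρ : ℝ} (hρ : 0 ≤ ρ)
    {Φ : List (Sym2 (Fin n)) → List (Sym2 (Fin n)) → ℝ}
    (hstep : ∀ (σ : EdgeOrdering n) t, t < T →
      ∑ e ∈ unseen (history σ t), Φ (history σ L) (history σ t ++ [e]) ≤
        (numEdges n - t) * (ρ * Φ (history σ L) (history σ t)))
    (hL : ∀ σ : EdgeOrdering n, Φ (history σ L) (history σ L) ≤ 1) :
    (∑ σ : EdgeOrdering n, Φ (history σ L) (history σ T)) / Fintype.card (EdgeOrdering n) ≤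
      ρ ^ (T - L) := by
  rw [div_le_iff₀ (Nat.cast_pos.2 Fintype.card_pos)]
  induction T, hLT using Nat.le_induction with
  | base => simpa using Finset.sum_le_sum fun σ (_ : σ ∈ Finset.univ) => hL σ
  | succ T hLT ih =>
    have hpos : (0 : ℝ) < numEdges n - T := sub_pos.2 (mod_cast hT)
    have hone : ∑ σ : EdgeOrdering n, Φ (history σ L) (history σ (T + 1)) ≤
        ρ * ∑ σ : EdgeOrdering n, Φ (history σ L) (history σ T) := by
      refine le_of_mul_le_mul_left ?_ hpos
      rw [sum_history_succ hLT hT, Finset.mul_sum, Finset.mul_sum]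
      exact Finset.sum_le_sum fun σ _ => hstep σ T T.lt_succ_self
    refine hone.trans ?_
    rw [Nat.sub_add_comm hLT, pow_succ', mul_assoc]
    exact mul_le_mul_of_nonneg_left
      (ih (by lia) fun σ t htT => hstep σ t (by lia)) hρ

end Unseen

section Hits

variable {n : ℕ}

/-- The number of edges of `F` that occur in the history `h`. -/
def hits (F : Finset (Sym2 (Fin n))) (h : List (Sym2 (Fin n))) : ℕ := (F.filter (· ∈ h)).card

lemma hits_append_singleton {F : Finset (Sym2 (Fin n))} {h : List (Sym2 (Fin n))}
    {e : Sym2 (Fin n)} (he : e ∈ unseen h) :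
    hits F (h ++ [e]) = hits F h + if e ∈ F then 1 else 0 := by
  have hnew : e ∉ h := (Finset.mem_filter.1 he).2.2
  have hunion : F.filter (· ∈ h ++ [e]) = F.filter (· ∈ h) ∪ F.filter (· = e) := by
    ext
    simp only [List.mem_append, List.mem_singleton, Finset.mem_union, Finset.mem_filter]
    tauto
  have hdisj : Disjoint (F.filter (· ∈ h)) (F.filter (· = e)) :=
    Finset.disjoint_filter.2 fun x _ hx (hxe : x = e) => hnew (hxe ▸ hx)
  rw [hits, hits, hunion, Finset.card_union_of_disjoint hdisj, Finset.filter_eq']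
  split_ifs <;> simp

lemma hits_add_card_inter_unseen {F : Finset (Sym2 (Fin n))} (hF : ∀ e ∈ F, ¬ e.IsDiag)
    (h : List (Sym2 (Fin n))) : hits F h + (F ∩ unseen h).card = F.card := by
  rw [← Finset.card_filter_add_card_filter_not (s := F) (· ∈ h), hits]
  congr 2
  ext e
  simp only [unseen, Finset.mem_inter, Finset.mem_filter, Finset.mem_univ, true_and]
  exact ⟨fun he => ⟨he.1, he.2.2⟩, fun he => ⟨he.1, hF e he.1, he.2⟩⟩

lemma sum_unseen_pow_hits (s : ℝ) (F : Finset (Sym2 (Fin n))) (h : List (Sym2 (Fin n))) :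
    ∑ e ∈ unseen h, s ^ hits F (h ++ [e]) =
      s ^ hits F h * ((unseen h).card + (s - 1) * (F ∩ unseen h).card) := by
  have hterm (e : Sym2 (Fin n)) (he : e ∈ unseen h) :
      s ^ hits F (h ++ [e]) = s ^ hits F h * (1 + (s - 1) * if e ∈ F then 1 else 0) := by
    rw [hits_append_singleton he]
    split_ifs <;> ring
  rw [Finset.sum_congr rfl hterm, ← Finset.mul_sum, Finset.sum_add_distrib, ← Finset.mul_sum,
    Finset.sum_boole, Finset.filter_mem_eq_inter, Finset.inter_comm]
  simp

/-- The weight `s ^ hits`, set to `0` once more than `c` edges of `F` have been hit. As long as it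
is positive, more than `F.card - c` edges of `F` remain unseen, which gives it a uniform drift. -/
def killedMoment (s : ℝ) (c : ℕ) (F : Finset (Sym2 (Fin n))) (h : List (Sym2 (Fin n))) : ℝ :=
  if hits F h ≤ c then s ^ hits F h else 0

lemma killedMoment_nonneg {s : ℝ} (hs : 0 ≤ s) (c : ℕ) (F : Finset (Sym2 (Fin n)))
    (h : List (Sym2 (Fin n))) : 0 ≤ killedMoment s c F h := by
  unfold killedMoment
  positivity

lemma sum_unseen_killedMoment_le {s : ℝ} (hs0 : 0 ≤ s) (hs1 : s ≤ 1) (c : ℕ)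
    {F : Finset (Sym2 (Fin n))} (hF : ∀ e ∈ F, ¬ e.IsDiag) (h : List (Sym2 (Fin n))) :
    ∑ e ∈ unseen h, killedMoment s c F (h ++ [e]) ≤
      ((unseen h).card - (1 - s) * (F.card - c)) * killedMoment s c F h := by
  by_cases hc : hits F h ≤ c
  · calc ∑ e ∈ unseen h, killedMoment s c F (h ++ [e])
        ≤ ∑ e ∈ unseen h, s ^ hits F (h ++ [e]) := by
          refine Finset.sum_le_sum fun e _ => ?_
          unfold killedMoment
          split_ifs
          exacts [le_rfl, by positivity]
      _ = ((unseen h).card - (1 - s) * (F ∩ unseen h).card) * s ^ hits F h := by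
          rw [sum_unseen_pow_hits]
          ring
      _ ≤ ((unseen h).card - (1 - s) * (F.card - c)) * killedMoment s c F h := by
          rw [killedMoment, if_pos hc, ← hits_add_card_inter_unseen hF h]
          push_cast
          have : (hits F h : ℝ) ≤ c := mod_cast hc
          gcongr
          linarith
  · rw [killedMoment, if_neg hc, mul_zero]
    refine (Finset.sum_eq_zero fun e he => ?_).le
    rw [killedMoment, hits_append_singleton he, if_neg (by lia)]

lemma sub_le_mul_exp_neg_div {x y N : ℝ} (hx : 0 < x) (hxN : x ≤ N) (hy : 0 ≤ y) :
    x - y ≤ x * Real.exp (-(y / N)) := by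
  have hxy : x * (y / N) ≤ y := by
    rw [mul_div_left_comm]
    exact mul_le_of_le_one_right hy (div_le_one_of_le₀ hxN (hx.trans_le hxN).le)
  calc x - y ≤ x * (-(y / N) + 1) := by linarith
    _ ≤ x * Real.exp (-(y / N)) := by gcongr; exact Real.add_one_le_exp _

lemma add_le_mul_exp_div {x y M : ℝ} (hM : 0 < M) (hMx : M ≤ x) (hy : 0 ≤ y) :
    x + y ≤ x * Real.exp (y / M) := by
  have hxy : y ≤ x * (y / M) := by
    rw [mul_div_left_comm]
    exact le_mul_of_one_le_right hy ((one_le_div hM).2 hMx)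
  have hx : 0 ≤ x := hM.le.trans hMx
  calc x + y ≤ x * (y / M + 1) := by linarith
    _ ≤ x * Real.exp (y / M) := by gcongr; exact Real.add_one_le_exp _

lemma pow_mul_Pr_hits_le {L T f c : ℕ} (hLT : L ≤ T) (hT : T ≤ numEdges n) (hcf : c ≤ f) {s : ℝ}
    (hs0 : 0 ≤ s) (hs1 : s ≤ 1) {W : List (Sym2 (Fin n)) → Prop}
    {F : List (Sym2 (Fin n)) → Finset (Sym2 (Fin n))}
    (hdiag : ∀ h, W h → ∀ e ∈ F h, ¬ e.IsDiag) (hf : ∀ h, W h → f ≤ (F h).card) :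
    s ^ c * Pr (fun σ : EdgeOrdering n =>
        W (history σ L) ∧ hits (F (history σ L)) (history σ T) ≤ c) ≤
      Real.exp (-((1 - s) * (f - c) / numEdges n)) ^ (T - L) := by
  let Φ (h₀ h : List (Sym2 (Fin n))) : ℝ := if W h₀ then killedMoment s c (F h₀) h else 0
  refine (mul_Pr_le_average (Φ := fun σ : EdgeOrdering n => Φ (history σ L) (history σ T))
    (fun σ => ?_) fun σ hσ => ?_).trans
    (average_history_le hLT hT (Real.exp_nonneg _) (fun σ t htT => ?_) fun σ => ?_)
  · have := killedMoment_nonneg hs0 c (F (history σ L)) (history σ T)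
    simp only [Φ]
    positivity
  · simp only [Φ, killedMoment, if_pos hσ.1, if_pos hσ.2]
    exact pow_le_pow_of_le_one hs0 hs1 hσ.2
  · by_cases hW : W (history σ L)
    · simp only [Φ, if_pos hW]
      refine (sum_unseen_killedMoment_le hs0 hs1 c (hdiag _ hW) _).trans ?_
      rw [← mul_assoc]
      refine mul_le_mul_of_nonneg_right ?_ (killedMoment_nonneg hs0 _ _ _)
      rw [card_unseen_history σ (htT.trans_le hT)]
      have hfF : (f : ℝ) ≤ (F (history σ L)).card := mod_cast hf _ hW
      have htN : (t : ℝ) < numEdges n := mod_cast htT.trans_le hT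
      have hcf' : (c : ℝ) ≤ f := mod_cast hcf
      calc (numEdges n - t - (1 - s) * ((F (history σ L)).card - c) : ℝ)
          ≤ numEdges n - t - (1 - s) * (f - c) := by gcongr
        _ ≤ _ := sub_le_mul_exp_neg_div (by linarith) (by simp)
          (mul_nonneg (sub_nonneg.2 hs1) (sub_nonneg.2 hcf'))
    · simp [Φ, hW]
  · simp only [Φ, killedMoment]
    split_ifs
    exacts [pow_le_one₀ hs0 hs1, zero_le_one, zero_le_one]

lemma pow_mul_Pr_le_hits {T f : ℕ} (hT : T < numEdges n) {s : ℝ} (hs : 1 ≤ s)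
    {F : Finset (Sym2 (Fin n))} (hF : F.card ≤ f) (D : ℕ) :
    s ^ D * Pr (fun σ : EdgeOrdering n => D ≤ hits F (history σ T)) ≤
      Real.exp ((s - 1) * f / (numEdges n - T)) ^ T := by
  have : 0 ≤ s := zero_le_one.trans hs
  refine (mul_Pr_le_average (Φ := fun σ : EdgeOrdering n => s ^ hits F (history σ T))
    (fun σ => by positivity) fun σ hσ => pow_le_pow_right₀ hs hσ).trans ?_
  refine average_history_le (L := 0) (Φ := fun _ h => s ^ hits F h) T.zero_le hT.le
    (Real.exp_nonneg _) (fun σ t htT => ?_) fun σ => ?_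
  · have hNT : (0 : ℝ) < numEdges n - T := sub_pos.2 (mod_cast hT)
    have htT' : (t : ℝ) ≤ T := mod_cast htT.le
    have hinter : ((F ∩ unseen (history σ t)).card : ℝ) ≤ f :=
      mod_cast (Finset.card_le_card Finset.inter_subset_left).trans hF
    calc ∑ e ∈ unseen (history σ t), s ^ hits F (history σ t ++ [e])
        = s ^ hits F (history σ t) *
            (numEdges n - t + (s - 1) * (F ∩ unseen (history σ t)).card) := by
          rw [sum_unseen_pow_hits, card_unseen_history σ (htT.trans hT)]
      _ ≤ s ^ hits F (history σ t) *
            ((numEdges n - t) * Real.exp ((s - 1) * f / (numEdges n - T))) := by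
          gcongr
          refine (add_le_add_right (mul_le_mul_of_nonneg_left hinter (sub_nonneg.2 hs)) _).trans
            (add_le_mul_exp_div hNT (by linarith) ?_)
          exact mul_nonneg (sub_nonneg.2 hs) (Nat.cast_nonneg _)
      _ = _ := by ring
  · simp [history_zero, hits]

end Hits

section Failure

variable {n : ℕ}

lemma Pr_not_hasNoBipartiteHole_le (g : ℕ) {L : ℕ} (hL : L ≤ numEdges n) :
    Pr (fun σ : EdgeOrdering n => ¬ HasNoBipartiteHole g (history σ L)) ≤
      4 ^ n * Real.exp (-(g ^ 2 / numEdges n)) ^ L := by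
  let W (PQ : Finset (Fin n) × Finset (Fin n)) : Prop :=
    Disjoint PQ.1 PQ.2 ∧ g ≤ PQ.1.card ∧ g ≤ PQ.2.card
  let F (PQ : Finset (Fin n) × Finset (Fin n)) : Finset (Sym2 (Fin n)) :=
    (PQ.1 ×ˢ PQ.2).image fun p => s(p.1, p.2)
  have hne {PQ} (hW : W PQ) {p q : Fin n} (hp : p ∈ PQ.1) (hq : q ∈ PQ.2) : p ≠ q :=
    fun h => Finset.disjoint_left.1 hW.1 hp (h ▸ hq)
  have hcard (PQ) (hW : W PQ) : g ^ 2 ≤ (F PQ).card := by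
    rw [Finset.card_image_of_injOn, Finset.card_product, sq]
    · exact Nat.mul_le_mul hW.2.1 hW.2.2
    · rintro ⟨p, q⟩ hpq ⟨p', q'⟩ hpq' heq
      simp only [Finset.coe_product, Set.mem_prod, Finset.mem_coe] at hpq hpq'
      rcases Sym2.eq_iff.1 heq with ⟨rfl, rfl⟩ | ⟨rfl, rfl⟩
      exacts [rfl, absurd rfl (hne hW hpq.1 hpq'.2)]
  have hhole (PQ) : Pr (fun σ : EdgeOrdering n => W PQ ∧ hits (F PQ) (history σ L) ≤ 0) ≤
      Real.exp (-(g ^ 2 / numEdges n)) ^ L := by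
    have := pow_mul_Pr_hits_le (L := 0) (s := 0) (W := fun _ => W PQ) (F := fun _ => F PQ)
      L.zero_le hL (g ^ 2).zero_le le_rfl zero_le_one (fun _ hW e he => ?_) fun _ => hcard PQ
    · simpa using this
    · obtain ⟨p, hp, rfl⟩ := Finset.mem_image.1 he
      exact hne hW (Finset.mem_product.1 hp).1 (Finset.mem_product.1 hp).2
  calc Pr (fun σ : EdgeOrdering n => ¬ HasNoBipartiteHole g (history σ L))
      ≤ Pr fun σ : EdgeOrdering n => ∃ PQ, W PQ ∧ hits (F PQ) (history σ L) ≤ 0 := by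
        refine Pr_mono fun σ hσ => ?_
        simp only [HasNoBipartiteHole] at hσ
        push Not at hσ
        obtain ⟨P, Q, hPQ, hP, hQ, hσ⟩ := hσ
        refine ⟨(P, Q), ⟨hPQ, hP, hQ⟩, (Finset.card_eq_zero.2 ?_).le⟩
        simp only [F, Finset.filter_eq_empty_iff, Finset.forall_mem_image, Finset.mem_product]
        exact fun p hp => hσ _ hp.1 _ hp.2
    _ ≤ ∑ PQ, Pr fun σ : EdgeOrdering n => W PQ ∧ hits (F PQ) (history σ L) ≤ 0 :=
        Pr_exists_le _
    _ ≤ ∑ _PQ : Finset (Fin n) × Finset (Fin n), Real.exp (-(g ^ 2 / numEdges n)) ^ L :=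
        Finset.sum_le_sum fun PQ _ => hhole PQ
    _ = 4 ^ n * Real.exp (-(g ^ 2 / numEdges n)) ^ L := by
        simp [← mul_pow]

/-- The vertices `y` such that the edge `xy` occurs in the history `h`. -/
def offered (x : Fin n) (h : List (Sym2 (Fin n))) : Finset (Fin n) :=
  Finset.univ.filter fun y => s(x, y) ∈ h

lemma Pr_exists_le_card_offered_le (D : ℕ) {L : ℕ} (hL : L < numEdges n) :
    Pr (fun σ : EdgeOrdering n => ∃ x, D ≤ (offered x (history σ L)).card) ≤
      n * Real.exp (n / (numEdges n - L)) ^ L / 2 ^ D := by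
  let star (x : Fin n) : Finset (Sym2 (Fin n)) := Finset.univ.image fun y => s(x, y)
  have hstar (x : Fin n) (h : List (Sym2 (Fin n))) : (offered x h).card = hits (star x) h := by
    rw [hits, Finset.filter_image, Finset.card_image_of_injective _ fun _ _ => Sym2.congr_right.1]
    rfl
  have hone (x : Fin n) : Pr (fun σ : EdgeOrdering n => D ≤ (offered x (history σ L)).card) ≤
      Real.exp (n / (numEdges n - L)) ^ L / 2 ^ D := by
    simp only [hstar]
    rw [le_div_iff₀' (by positivity)]
    have hcard : (star x).card ≤ n := Finset.card_image_le.trans (by simp)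
    have := pow_mul_Pr_le_hits hL one_le_two hcard D
    norm_num at this
    exact this
  refine (Pr_exists_le _).trans ((Finset.sum_le_sum fun x _ => hone x).trans_eq ?_)
  simp [mul_div_assoc]

lemma Pr_exists_card_filter_drop_le {L t m D f c : ℕ} (hLt : L ≤ t) (ht : t ≤ numEdges n)
    (hf : f + m + D ≤ n) (hcf : c ≤ f) {s : ℝ} (hs0 : 0 < s) (hs1 : s ≤ 1)
    {Y : List (Sym2 (Fin n)) → Finset (Fin n)} (hY : ∀ h, n ≤ (Y h).card + m) :
    Pr (fun σ : EdgeOrdering n => ∃ x, (x ∉ Y (history σ L) ∧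
        (offered x (history σ L)).card ≤ D) ∧
        ((Y (history σ L)).filter fun y => s(x, y) ∈ (history σ t).drop L).card ≤ c) ≤
      n * Real.exp (-((1 - s) * (f - c) / numEdges n)) ^ (t - L) / s ^ c := by
  let F (x : Fin n) (h : List (Sym2 (Fin n))) : Finset (Sym2 (Fin n)) :=
    ((Y h).filter fun y => s(x, y) ∉ h).image fun y => s(x, y)
  have hcard (x h) (hx : x ∉ Y h ∧ (offered x h).card ≤ D) : f ≤ (F x h).card := by
    rw [Finset.card_image_of_injective _ fun _ _ => Sym2.congr_right.1]
    have hsplit := Finset.card_filter_add_card_filter_not (s := Y h) fun y => s(x, y) ∈ h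
    have hseen : ((Y h).filter fun y => s(x, y) ∈ h).card ≤ (offered x h).card :=
      Finset.card_le_card (Finset.filter_subset_filter _ (Finset.subset_univ _))
    have := hY h
    lia
  have hhits (x : Fin n) (σ : EdgeOrdering n) : hits (F x (history σ L)) (history σ t) ≤
      ((Y (history σ L)).filter fun y => s(x, y) ∈ (history σ t).drop L).card := by
    rw [hits, Finset.filter_image]
    refine Finset.card_image_le.trans (Finset.card_le_card fun y hy => ?_)
    simp only [Finset.mem_filter] at hy ⊢
    obtain ⟨⟨hyY, hnew⟩, hmem⟩ := hy
    rw [← List.take_append_drop L (history σ t), take_history, min_eq_left hLt,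
      List.mem_append] at hmem
    exact ⟨hyY, hmem.resolve_left hnew⟩
  have hone (x : Fin n) : Pr (fun σ : EdgeOrdering n => (x ∉ Y (history σ L) ∧
      (offered x (history σ L)).card ≤ D) ∧
      ((Y (history σ L)).filter fun y => s(x, y) ∈ (history σ t).drop L).card ≤ c) ≤
      Real.exp (-((1 - s) * (f - c) / numEdges n)) ^ (t - L) / s ^ c := by
    rw [le_div_iff₀' (by positivity)]
    refine le_trans ?_ (pow_mul_Pr_hits_le hLt ht hcf hs0.le hs1 (fun h hx e he => ?_) (hcard x))
    · gcongr
      exact Pr_mono fun σ hσ => ⟨hσ.1, (hhits x σ).trans hσ.2⟩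
    · obtain ⟨y, hy, rfl⟩ := Finset.mem_image.1 he
      exact fun hxy : x = y => hx.1 (hxy ▸ (Finset.mem_filter.1 hy).1)
  refine (Pr_exists_le _).trans ((Finset.sum_le_sum fun x _ => hone x).trans_eq ?_)
  simp [mul_div_assoc]

lemma Pr_not_isKConnected_assemble_le {α : Type*} [Fintype α] {T : SimpleGraph α} {B : Finset α}
    {col : Fin n → α} {d L m g D f t : ℕ} {s : ℝ} (hd : 1 ≤ d) (hT : IsKConnected d T)
    (hdeg : ∀ c, T.degree c ≤ d) (hB : d ≤ B.card) (hg : 0 < g)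
    (hbal : ∀ c c', (Finset.univ.filter (col · = c)).card ≤
      (Finset.univ.filter (col · = c')).card + 1)
    (hlarge : ∀ c, 3 * g ≤ (Finset.univ.filter (col · = c)).card)
    (hm : (1 + d) ^ Fintype.card α * ((Fintype.card α ^ 2 + Fintype.card α) * g) ≤ m)
    (hn : d + 1 ≤ n) (hLt : L < t) (ht : t ≤ numEdges n) (hf : f + m + D ≤ n) (hdf : d ≤ f)
    (hs0 : 0 < s) (hs1 : s ≤ 1) :
    Pr (fun σ : EdgeOrdering n => ¬ IsKConnected d (assemble T B col d L m (history σ t))) ≤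
      4 ^ n * Real.exp (-(g ^ 2 / numEdges n)) ^ L +
      (n * Real.exp (n / (numEdges n - L)) ^ L / 2 ^ D +
        n * Real.exp (-((1 - s) * (f - d) / numEdges n)) ^ (t - L) / s ^ d) := by
  let Y (h : List (Sym2 (Fin n))) : Finset (Fin n) := linkedCore d m (phaseOne T B col h)
  have hY (h) : n ≤ (Y h).card + m := by
    simpa using card_le_card_linkedCore_add (d := d) (m := m) (phaseOne T B col h)
  refine le_trans (Pr_mono fun σ hσ => ?_) <| (Pr_or_le _ _).trans <|
    add_le_add (Pr_not_hasNoBipartiteHole_le g (hLt.le.trans ht)) <| (Pr_or_le _ _).trans <|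
    add_le_add (Pr_exists_le_card_offered_le D (hLt.trans_le ht))
      (Pr_exists_card_filter_drop_le hLt.le ht hf hdf hs0 hs1 hY)
  by_contra! hgood
  obtain ⟨hnohole, hstar, hlink⟩ := hgood
  have htake : (history σ t).take L = history σ L := by rw [take_history, min_eq_left hLt.le]
  refine hσ (isKConnected_assemble hd (by simpa using hn) ?_ fun x hx => ?_)
  · rw [htake]
    obtain ⟨Y, hlinked, hcard⟩ := exists_linked_phaseOne hd hT hdeg hB hg hbal hlarge hnohole
    exact ⟨Y, hlinked, hcard.trans (Nat.add_le_add_left hm _)⟩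
  · rw [htake] at hx ⊢
    refine (hlink x ⟨hx, (hstar x).le⟩).le.trans_eq ?_
    congr!

end Failure

/-! ### Asymptotics of the parameters -/

section Asymptotics

/-- The number `t = ⌈(1 + ε) n log n / 2⌉` of rounds Builder is given. -/
def numRounds (ε : ℝ) (n : ℕ) : ℕ := ⌈(1 + ε) * n * Real.log n / 2⌉₊

lemma numEdges_eq_choose_two (n : ℕ) : numEdges n = n.choose 2 := by
  rw [numEdges, ← edgeFinset_card, card_edgeFinset_top_eq_card_choose_two, Fintype.card_fin]

lemma numEdges_le_sq_div_two (n : ℕ) : (numEdges n : ℝ) ≤ n ^ 2 / 2 := by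
  rw [numEdges_eq_choose_two, Nat.cast_choose_two]
  nlinarith [n.cast_nonneg (α := ℝ)]

lemma sq_div_four_le_numEdges {n : ℕ} (hn : 2 ≤ n) : (n : ℝ) ^ 2 / 4 ≤ numEdges n := by
  have hn' : (2 : ℝ) ≤ n := by exact_mod_cast hn
  rw [numEdges_eq_choose_two, Nat.cast_choose_two]
  nlinarith

lemma numEdges_pos {n : ℕ} (hn : 2 ≤ n) : (0 : ℝ) < numEdges n := by
  rw [numEdges_eq_choose_two]
  exact_mod_cast Nat.choose_pos hn

lemma eventually_le_natCast (K : ℝ) : ∀ᶠ n : ℕ in atTop, K ≤ n :=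
  tendsto_natCast_atTop_atTop.eventually_ge_atTop K

lemma tendsto_log_natCast_atTop : Tendsto (fun n : ℕ => Real.log n) atTop atTop :=
  Real.tendsto_log_atTop.comp tendsto_natCast_atTop_atTop

lemma eventually_mul_lt_numRounds (C : ℕ) {ε : ℝ} (hε : 0 ≤ ε) :
    ∀ᶠ n in atTop, C * n < numRounds ε n := by
  filter_upwards [eventually_gt_atTop 0, tendsto_log_natCast_atTop.eventually_gt_atTop (2 * C)]
    with n hn hlog
  have hn' : (0 : ℝ) < n := by exact_mod_cast hn
  refine Nat.lt_ceil.2 ?_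
  push_cast
  nlinarith [mul_nonneg hε (mul_nonneg hn'.le (by linarith : 0 ≤ Real.log n))]

lemma eventually_numRounds_le_numEdges {ε : ℝ} (hε1 : ε ≤ 1) :
    ∀ᶠ n in atTop, numRounds ε n ≤ numEdges n := by
  filter_upwards [eventually_ge_atTop 2, tendsto_natCast_atTop_atTop.eventually
    (Real.isLittleO_log_id_atTop.def (by norm_num : (0 : ℝ) < 1 / 4))] with n hn hlog
  have hlog0 : 0 ≤ Real.log n := Real.log_natCast_nonneg n
  have hlog' : Real.log n ≤ 1 / 4 * n := by simpa [abs_of_nonneg hlog0] using hlog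
  refine Nat.ceil_le.2 (le_trans ?_ (sq_div_four_le_numEdges hn))
  calc (1 + ε) * n * Real.log n / 2 ≤ (1 + 1) * n * (1 / 4 * n) / 2 := by gcongr
    _ = n ^ 2 / 4 := by ring

lemma tendsto_hole_bound {Γ : ℕ} (hΓ : 0 < Γ) :
    Tendsto (fun n : ℕ => (4 : ℝ) ^ n *
      Real.exp (-((n / Γ : ℕ) ^ 2 / numEdges n)) ^ (4 * Γ ^ 2 * n)) atTop (nhds 0) := by
  have hbase : 4 * Real.exp (-2) < 1 := by
    have hexp : Real.exp 2 = Real.exp 1 ^ 2 := by rw [← Real.exp_nat_mul]; norm_num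
    rw [Real.exp_neg, ← div_eq_mul_inv, div_lt_one (Real.exp_pos _), hexp]
    nlinarith [Real.exp_one_gt_d9]
  refine squeeze_zero' (Eventually.of_forall fun n => by positivity) ?_
    (tendsto_pow_atTop_nhds_zero_of_lt_one (by positivity) hbase)
  filter_upwards [eventually_ge_atTop Γ, eventually_ge_atTop 2] with n hnΓ hn
  have hdiv : (n : ℝ) ≤ 2 * Γ * (n / Γ : ℕ) := by
    have hlt := Nat.lt_mul_div_succ n hΓ
    have hpos := Nat.mul_le_mul_left Γ (Nat.div_pos hnΓ hΓ)
    exact_mod_cast (by lia : n ≤ 2 * Γ * (n / Γ))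
  have hN : (0 : ℝ) < numEdges n := numEdges_pos hn
  rw [mul_pow, ← Real.exp_nat_mul, ← Real.exp_nat_mul]
  refine mul_le_mul_of_nonneg_left (Real.exp_le_exp.2 ?_) (by positivity)
  rw [mul_neg, mul_neg, neg_le_neg_iff, ← mul_div_assoc, le_div_iff₀ hN]
  push_cast
  calc n * 2 * (numEdges n : ℝ) ≤ n * 2 * (n ^ 2 / 2) := by
        gcongr; exact numEdges_le_sq_div_two n
    _ = n * n ^ 2 := by ring
    _ ≤ n * (2 * Γ * (n / Γ : ℕ)) ^ 2 := by gcongr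
    _ = 4 * Γ ^ 2 * n * (n / Γ : ℕ) ^ 2 := by ring

lemma tendsto_star_bound (C : ℕ) {η : ℝ} (hη : 0 < η) :
    Tendsto (fun n : ℕ => n * Real.exp (n / (numEdges n - (C * n : ℕ))) ^ (C * n) /
      2 ^ ⌊η * n⌋₊) atTop (nhds 0) := by
  have hbase : ((2 : ℝ) ^ η)⁻¹ < 1 := inv_lt_one_of_one_lt₀ (Real.one_lt_rpow one_lt_two hη)
  have hlim := (tendsto_self_mul_const_pow_of_lt_one (by positivity) hbase).const_mul
    (2 * Real.exp (8 * C))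
  rw [mul_zero] at hlim
  refine squeeze_zero' ?_ ?_ hlim
  · exact Eventually.of_forall fun n => by positivity
  filter_upwards [eventually_ge_atTop 2, eventually_ge_atTop (8 * C)] with n hn hnC
  have : (0 : ℝ) < n := by exact_mod_cast (by lia : 0 < n)
  have hnC' : 8 * (C : ℝ) ≤ n := by exact_mod_cast hnC
  have hdenom : (n : ℝ) ^ 2 / 8 ≤ numEdges n - (C * n : ℕ) := by
    push_cast
    nlinarith [sq_div_four_le_numEdges hn]
  have hexp : Real.exp (n / (numEdges n - (C * n : ℕ))) ^ (C * n) ≤ Real.exp (8 * C) := by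
    rw [← Real.exp_nat_mul, Real.exp_le_exp]
    calc ((C * n : ℕ) : ℝ) * (n / (numEdges n - (C * n : ℕ)))
        ≤ (C * n : ℕ) * (n / (n ^ 2 / 8)) := by gcongr
      _ = 8 * C := by push_cast; field_simp
  have hpow : ((2 : ℝ) ^ η) ^ n ≤ 2 * 2 ^ ⌊η * n⌋₊ := by
    rw [← Real.rpow_mul_natCast two_pos.le, ← pow_succ', ← Real.rpow_natCast]
    exact Real.rpow_le_rpow_of_exponent_le one_le_two (mod_cast (Nat.lt_floor_add_one _).le)
  rw [div_le_iff₀ (by positivity)]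
  calc n * Real.exp (n / (numEdges n - (C * n : ℕ))) ^ (C * n) ≤ n * Real.exp (8 * C) := by gcongr
    _ = n * Real.exp (8 * C) * ((((2 : ℝ) ^ η)⁻¹) ^ n * ((2 : ℝ) ^ η) ^ n) := by
        rw [← mul_pow, inv_mul_cancel₀ (by positivity), one_pow, mul_one]
    _ ≤ n * Real.exp (8 * C) * ((((2 : ℝ) ^ η)⁻¹) ^ n * (2 * 2 ^ ⌊η * n⌋₊)) := by gcongr
    _ = 2 * Real.exp (8 * C) * (n * (((2 : ℝ) ^ η)⁻¹) ^ n) * 2 ^ ⌊η * n⌋₊ := by ring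

lemma eventually_le_link_exponent (d C : ℕ) {ε : ℝ} (hε0 : 0 < ε) (hε1 : ε ≤ 1) :
    ∀ᶠ n : ℕ in atTop, (1 + ε / 4) * Real.log n ≤ (numRounds ε n - C * n : ℕ) *
      ((1 - ε / 16) * ((n - 2 * ⌊ε / 16 * n⌋₊ : ℕ) - d) / numEdges n) := by
  filter_upwards [eventually_ge_atTop 2, eventually_le_natCast (16 * d / ε),
    tendsto_log_natCast_atTop.eventually_ge_atTop (32 * C / ε)] with n hn hnd hlog
  obtain ⟨η, rfl⟩ : ∃ η, ε = 16 * η := ⟨ε / 16, by ring⟩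
  have hη : 0 < η := by linarith
  have hη1 : η ≤ 1 / 16 := by linarith
  have hn0 : (0 : ℝ) < n := by exact_mod_cast (by lia : 0 < n)
  have hlog0 : 0 ≤ Real.log n := Real.log_natCast_nonneg n
  have hN : (0 : ℝ) < numEdges n := numEdges_pos hn
  rw [div_le_iff₀ hε0] at hnd hlog
  rw [mul_div_cancel_left₀ η (by norm_num : (16 : ℝ) ≠ 0)]
  have hrounds : (1 + 15 * η) * n * Real.log n / 2 ≤ (numRounds (16 * η) n - C * n : ℕ) := by
    have hceil : (1 + 16 * η) * n * Real.log n / 2 ≤ numRounds (16 * η) n := Nat.le_ceil _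
    have hsub : (numRounds (16 * η) n : ℝ) ≤ (numRounds (16 * η) n - C * n : ℕ) + C * n := by
      exact_mod_cast le_tsub_add
    nlinarith
  have htargets : (1 - 3 * η) * n ≤ (n - 2 * ⌊η * n⌋₊ : ℕ) - d := by
    have hfloor : (⌊η * n⌋₊ : ℝ) ≤ η * n := Nat.floor_le (by positivity)
    have hsub : (n : ℝ) ≤ (n - 2 * ⌊η * n⌋₊ : ℕ) + 2 * ⌊η * n⌋₊ := by exact_mod_cast le_tsub_add
    linarith
  have hconst : 1 + 16 * η / 4 ≤ (1 + 15 * η) * ((1 - η) * (1 - 3 * η)) := by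
    nlinarith [mul_pos hη hη, mul_pos (mul_pos hη hη) hη]
  calc (1 + 16 * η / 4) * Real.log n
      ≤ (1 + 15 * η) * ((1 - η) * (1 - 3 * η)) * Real.log n := by gcongr
    _ = (1 + 15 * η) * n * Real.log n / 2 * ((1 - η) * ((1 - 3 * η) * n) / (n ^ 2 / 2)) := by
        field_simp
    _ ≤ (numRounds (16 * η) n - C * n : ℕ) *
          ((1 - η) * ((n - 2 * ⌊η * n⌋₊ : ℕ) - d) / numEdges n) := by
        have hη1' : 0 ≤ 1 - η := by linarith
        have htargets0 : 0 ≤ (1 - 3 * η) * n := mul_nonneg (by linarith) hn0.le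
        gcongr
        · exact mul_nonneg hη1' (htargets0.trans htargets)
        · exact numEdges_le_sq_div_two n

lemma tendsto_link_bound (d C : ℕ) {ε : ℝ} (hε0 : 0 < ε) (hε1 : ε ≤ 1) :
    Tendsto (fun n : ℕ => n * Real.exp (-((1 - ε / 16) *
      ((n - 2 * ⌊ε / 16 * n⌋₊ : ℕ) - d) / numEdges n)) ^ (numRounds ε n - C * n) /
      (ε / 16) ^ d) atTop (nhds 0) := by
  have hlim := ((Real.tendsto_exp_neg_atTop_nhds_zero.comp
    (tendsto_log_natCast_atTop.const_mul_atTop (by linarith : 0 < ε / 4))).div_const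
      ((ε / 16) ^ d))
  rw [zero_div] at hlim
  refine squeeze_zero' (Eventually.of_forall fun n => by positivity) ?_ hlim
  filter_upwards [eventually_le_link_exponent d C hε0 hε1, eventually_gt_atTop 0] with n hexp hn
  rw [← Real.exp_nat_mul, mul_neg]
  gcongr
  calc n * Real.exp _ ≤ n * Real.exp (-((1 + ε / 4) * Real.log n)) := by gcongr
    _ = Real.exp (Real.log n) * Real.exp (-((1 + ε / 4) * Real.log n)) := by
        rw [Real.exp_log (by exact_mod_cast hn)]
    _ = Real.exp (-(ε / 4 * Real.log n)) := by rw [← Real.exp_add]; ring_nf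

end Asymptotics

/-! ### The strategy for a fixed margin -/

section Equitable

variable {α : Type*} [Fintype α] {n : ℕ}

/-- A colouring of `Fin n` is equitable if the sizes of its colour classes lie between
`⌊n / |α|⌋` and `⌊n / |α|⌋ + 1`. -/
def IsEquitable (col : Fin n → α) : Prop :=
  ∀ c, n / Fintype.card α ≤ (Finset.univ.filter (col · = c)).card ∧
    (Finset.univ.filter (col · = c)).card ≤ n / Fintype.card α + 1

lemma exists_isEquitable (α : Type*) [Fintype α] [Nonempty α] (n : ℕ) :
    ∃ col : Fin n → α, IsEquitable col := by
  have hpos : 0 < Fintype.card α := Fintype.card_pos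
  let e := Fintype.equivFin α
  refine ⟨fun v => e.symm ⟨v % Fintype.card α, Nat.mod_lt _ hpos⟩, fun c => ?_⟩
  have hclass : (Finset.univ.filter fun v : Fin n =>
      e.symm ⟨v % Fintype.card α, Nat.mod_lt _ hpos⟩ = c).card =
      n.count (· ≡ e c [MOD Fintype.card α]) := by
    rw [Nat.count_eq_card_filter_range, Finset.card_filter, Finset.card_filter,
      ← Fin.sum_univ_eq_sum_range fun i => if i ≡ e c [MOD Fintype.card α] then 1 else 0]
    simp only [Equiv.symm_apply_eq, Fin.ext_iff, Nat.ModEq, Nat.mod_eq_of_lt (e c).2]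
  rw [hclass, Nat.count_modEq_card _ hpos]
  split_ifs <;> lia

lemma IsEquitable.card_filter_mem_le {col : Fin n → α} (hcol : IsEquitable col) (B : Finset α) :
    (Finset.univ.filter (col · ∈ B)).card ≤ B.card * (n / Fintype.card α + 1) := by
  refine (Finset.card_le_card fun v hv => ?_).trans
    (Finset.card_biUnion_le_card_mul B (fun b => Finset.univ.filter (col · = b)) _
      fun b _ => (hcol b).2)
  simpa using hv

end Equitable

section FixedMargin

variable {α : Type*} [Fintype α] {T : SimpleGraph α} {B : Finset α} {d n : ℕ} {ε : ℝ}

lemma numAccepted_onlineStrategy {acc : List (Sym2 (Fin n)) → SimpleGraph (Fin n)}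
    (hacc : IsOnline acc) (σ : EdgeOrdering n) (t : ℕ) :
    numAccepted (onlineStrategy acc) σ t = (acc (history σ t)).edgeFinset.card := by
  rw [numAccepted, builderGraph_onlineStrategy hacc]
  congr 1
  ext e
  simp

lemma numAccepted_assemble_le {col : Fin n → α} {L m : ℕ} (hdeg : ∀ c, T.degree c ≤ d)
    (hB : B.card ≤ d) (hcol : IsEquitable col) (hα : 8 ≤ Fintype.card α * ε) (hn : 4 ≤ n * ε)
    (hm : m ≤ ε / 16 * n) (σ : EdgeOrdering n) (t : ℕ) :
    numAccepted (onlineStrategy (assemble T B col d L m)) σ t ≤ ⌈(1 + ε) * d * n / 2⌉₊ := by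
  set M := Fintype.card α
  have hM0 : (0 : ℝ) < M := by
    refine Nat.cast_pos.2 (Nat.pos_of_ne_zero fun h0 => ?_)
    norm_num [h0] at hα
  have hedges : 2 * numAccepted (onlineStrategy (assemble T B col d L m)) σ t ≤
      d * n + 2 * (d * (n / M + 1)) + 2 * (d * m) := by
    rw [numAccepted_onlineStrategy isOnline_assemble]
    refine (two_mul_card_edgeFinset_assemble_le hdeg).trans ?_
    rw [Fintype.card_fin]
    gcongr
    exact (hcol.card_filter_mem_le B).trans (Nat.mul_le_mul_right _ hB)
  have hdiv : ((n / M : ℕ) : ℝ) ≤ ε / 8 * n := by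
    refine Nat.cast_div_le.trans ((div_le_iff₀ hM0).2 ?_)
    nlinarith [n.cast_nonneg (α := ℝ)]
  have hextra : 2 * (((n / M : ℕ) : ℝ) + 1) + 2 * m ≤ ε * n := by linarith
  suffices (numAccepted (onlineStrategy (assemble T B col d L m)) σ t : ℝ) ≤
      (1 + ε) * d * n / 2 from Nat.cast_le.1 (this.trans (Nat.le_ceil _))
  have hedges' : 2 * (numAccepted (onlineStrategy (assemble T B col d L m)) σ t : ℝ) ≤
      d * n + 2 * (d * ((n / M : ℕ) + 1)) + 2 * (d * m) := by exact_mod_cast hedges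
  nlinarith [mul_le_mul_of_nonneg_left hextra (d.cast_nonneg (α := ℝ))]

lemma exists_eventually_Pr_not_isKConnected_assemble_le (hd : 1 ≤ d) (hT : IsKConnected d T)
    (hdeg : ∀ c, T.degree c ≤ d) (hB : d ≤ B.card) (hε0 : 0 < ε) (hε1 : ε ≤ 1) :
    ∃ C : ℕ, ∀ᶠ n in atTop, ∀ col : Fin n → α, IsEquitable col →
      Pr (fun σ : EdgeOrdering n => ¬ IsKConnected d
        (assemble T B col d (C * n) ⌊ε / 16 * n⌋₊ (history σ (numRounds ε n)))) ≤ ε := by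
  set M := Fintype.card α
  have hMpos : 0 < M := (Nat.succ_pos d).trans_le hT.1
  obtain ⟨Γ, hΓ⟩ := exists_nat_ge
    (max (((1 + d) ^ M * (M ^ 2 + M) : ℕ) / (ε / 16)) (3 * M : ℕ))
  obtain ⟨hΓQ, hΓM⟩ := max_le_iff.1 hΓ
  rw [div_le_iff₀ (by positivity)] at hΓQ
  rw [Nat.cast_le] at hΓM
  have hΓ0 : 0 < Γ := by lia
  have hlim := (tendsto_hole_bound hΓ0).add ((tendsto_star_bound (4 * Γ ^ 2)
    (by positivity : 0 < ε / 16)).add (tendsto_link_bound d (4 * Γ ^ 2) hε0 hε1))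
  simp only [add_zero] at hlim
  refine ⟨4 * Γ ^ 2, ?_⟩
  filter_upwards [hlim.eventually_le_const hε0, eventually_ge_atTop (2 * d + 1),
    eventually_ge_atTop Γ, eventually_mul_lt_numRounds (4 * Γ ^ 2) hε0.le,
    eventually_numRounds_le_numEdges hε1] with n hsum hnd hnΓ hL ht col hcol
  have hfloor : (⌊ε / 16 * n⌋₊ : ℝ) ≤ ε / 16 * n := Nat.floor_le (by positivity)
  have hfloor4 : 4 * ⌊ε / 16 * n⌋₊ ≤ n := by
    have : 4 * (⌊ε / 16 * n⌋₊ : ℝ) ≤ n := by nlinarith [n.cast_nonneg (α := ℝ)]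
    exact_mod_cast this
  have hΓdiv : Γ * (n / Γ) ≤ n := Nat.mul_div_le n Γ
  refine (Pr_not_isKConnected_assemble_le (g := n / Γ) (D := ⌊ε / 16 * n⌋₊)
    (f := n - 2 * ⌊ε / 16 * n⌋₊) (s := ε / 16) hd hT hdeg hB (Nat.div_pos hnΓ hΓ0)
    (fun c c' => (hcol c).2.trans (Nat.add_le_add_right (hcol c').1 1)) (fun c => ?_) ?_
    (by lia) hL ht (by lia) (by lia) (by positivity) (by linarith)).trans hsum
  · refine le_trans ((Nat.le_div_iff_mul_le hMpos).2 ?_) (hcol c).1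
    calc 3 * (n / Γ) * M = 3 * M * (n / Γ) := by ring
      _ ≤ Γ * (n / Γ) := Nat.mul_le_mul_right _ hΓM
      _ ≤ n := hΓdiv
  · refine Nat.le_floor ?_
    rw [← mul_assoc, Nat.cast_mul]
    calc (((1 + d) ^ M * (M ^ 2 + M) : ℕ) : ℝ) * (n / Γ : ℕ)
        ≤ Γ * (ε / 16) * (n / Γ : ℕ) := by gcongr
      _ = ε / 16 * (Γ * (n / Γ) : ℕ) := by push_cast; ring
      _ ≤ ε / 16 * n := by gcongr

/-- Within the first `numRounds ε n` rounds the strategy respects the edge budget, and it fails to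
build a `d`-connected graph with probability at most `ε`. -/
def IsGoodStrategy (d : ℕ) (ε : ℝ) (strat : Strategy n) : Prop :=
  (∀ σ : EdgeOrdering n, numAccepted strat σ (numRounds ε n) ≤ ⌈(1 + ε) * d * n / 2⌉₊) ∧
    Pr (fun σ : EdgeOrdering n => ¬ IsKConnected d (builderGraph strat σ (numRounds ε n))) ≤ ε

lemma eventually_exists_isGoodStrategy (hd : 2 ≤ d) (hε0 : 0 < ε) (hε1 : ε ≤ 1) :
    ∀ᶠ n in atTop, ∃ strat : Strategy n, IsGoodStrategy d ε strat := by
  obtain ⟨M, hM⟩ := exists_nat_ge (8 / ε)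
  obtain ⟨α, _, T, hMα, hdeg, hT⟩ := exists_isKConnected_degree_le hd M
  obtain ⟨B, -, hB⟩ := Finset.exists_subset_card_eq
    (show d ≤ (Finset.univ : Finset α).card from (Nat.le_succ d).trans hT.1)
  have : Nonempty α := Fintype.card_pos_iff.1 ((Nat.succ_pos d).trans_le hT.1)
  have hα : 8 ≤ Fintype.card α * ε := (div_le_iff₀ hε0).1 (hM.trans (Nat.cast_le.2 hMα))
  obtain ⟨C, hC⟩ := exists_eventually_Pr_not_isKConnected_assemble_le (by lia) hT hdeg hB.ge
    hε0 hε1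
  filter_upwards [hC, eventually_le_natCast (4 / ε)] with n hfail hn
  obtain ⟨col, hcol⟩ := exists_isEquitable α n
  refine ⟨onlineStrategy (assemble T B col d (C * n) ⌊ε / 16 * n⌋₊), fun σ => ?_, ?_⟩
  · exact numAccepted_assemble_le hdeg hB.le hcol hα ((div_le_iff₀ hε0).1 hn)
      (Nat.floor_le (by positivity)) σ _
  · simpa only [builderGraph_onlineStrategy isOnline_assemble] using hfail col hcol

lemma IsGoodStrategy.one_sub_le_Pr {strat : Strategy n} (h : IsGoodStrategy d ε strat) :
    1 - ε ≤ Pr fun σ : EdgeOrdering n =>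
      IsKConnected d (builderGraph strat σ (numRounds ε n)) :=
  (sub_le_sub_left h.2 1).trans (one_sub_Pr_not_le _)

end FixedMargin

lemma numAccepted_const_false {n : ℕ} (σ : EdgeOrdering n) (t : ℕ) :
    numAccepted (fun _ => false) σ t = 0 := by
  simp [numAccepted, builderGraph]

lemma exists_tendsto_zero_eventually {P : ℕ → ℝ → Prop}
    (hP : ∀ ε, 0 < ε → ε ≤ 1 → ∀ᶠ n in atTop, P n ε) :
    ∃ ε : ℕ → ℝ, (∀ n, 0 ≤ ε n) ∧ Tendsto ε atTop (nhds 0) ∧ ∀ᶠ n in atTop, P n (ε n) := by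
  have hP' (k : ℕ) : ∀ᶠ n in atTop, P n (1 / (k + 1)) :=
    hP _ (by positivity) (div_le_one_of_le₀ (by simp) (by positivity))
  let k (n : ℕ) : ℕ := Nat.findGreatest (fun k => P n (1 / (k + 1))) n
  have hk : Tendsto k atTop atTop := by
    refine tendsto_atTop.2 fun K => ?_
    filter_upwards [hP' K, eventually_ge_atTop K] with n hPn hn
    exact Nat.le_findGreatest hn hPn
  refine ⟨fun n => 1 / (k n + 1), fun n => by positivity,
    tendsto_one_div_add_atTop_nhds_zero_nat.comp hk, ?_⟩
  filter_upwards [hP' 0] with n hn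
  exact Nat.findGreatest_spec (P := fun k => P n (1 / (k + 1))) n.zero_le hn

/-- Fix an integer `d ≥ 2`. There exists a sequence `(ε_n)` of nonnegative
reals tending to `0` such that, with `t = ⌈(1+ε_n)·n·log n/2⌉` and `b = ⌈(1+ε_n)·d·n/2⌉`,
Builder has a `(t,b)`-strategy for which `G_t` is a.a.s. `d`-connected. -/
theorem statement0 (d : ℕ) (hd : 2 ≤ d) :
    ∃ ε : ℕ → ℝ, (∀ n, 0 ≤ ε n) ∧ Tendsto ε atTop (nhds 0) ∧
      ∃ strat : (n : ℕ) → Strategy n,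
        (∀ n (σ : EdgeOrdering n),
            numAccepted (strat n) σ ⌈(1 + ε n) * n * Real.log n / 2⌉₊
              ≤ ⌈(1 + ε n) * d * n / 2⌉₊) ∧
        Tendsto (fun n =>
            Pr (fun σ : EdgeOrdering n =>
              IsKConnected d (builderGraph (strat n) σ ⌈(1 + ε n) * n * Real.log n / 2⌉₊)))
          atTop (nhds 1) := by
  obtain ⟨ε, hε0, hε, hgood⟩ := exists_tendsto_zero_eventually
    (P := fun n ε => ∃ strat : Strategy n, IsGoodStrategy d ε strat)
    fun ε hε0 hε1 => eventually_exists_isGoodStrategy hd hε0 hε1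
  have hchoice (n : ℕ) : ∃ strat : Strategy n,
      (∀ σ, numAccepted strat σ (numRounds (ε n) n) ≤ ⌈(1 + ε n) * d * n / 2⌉₊) ∧
      ((∃ strat : Strategy n, IsGoodStrategy d (ε n) strat) → IsGoodStrategy d (ε n) strat) := by
    by_cases h : ∃ strat : Strategy n, IsGoodStrategy d (ε n) strat
    · exact ⟨h.choose, h.choose_spec.1, fun _ => h.choose_spec⟩
    · exact ⟨fun _ => false, fun σ => by simp [numAccepted_const_false], fun h' => absurd h' h⟩
  choose strat hbudget hstrat using hchoice
  refine ⟨ε, hε0, hε, strat, hbudget, ?_⟩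
  refine tendsto_of_tendsto_of_tendsto_of_le_of_le' (by simpa using hε.const_sub 1)
    tendsto_const_nhds ?_ (Eventually.of_forall fun n => Pr_le_one _)
  filter_upwards [hgood] with n hn
  exact (hstrat n hn).one_sub_le_Pr

end
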